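/- arXiv:1406.0373 — 2 statements merged into one kernel-verified Lean document; each statement's English description precedes it below -/
import Mathlib

section
/- Fix integers k ≥ r ≥ 3, u ∈ ω(1) ∩ o(n), and a constant μ with 0 < μ < μ_c(k,r). Let τ* be the unique solution in (0, 1/(r−2)) of μ = binom(k,r)^{−1} · τ*/(r(1+τ*)^{r−1}), and let τ > τ* be any constant. Then, for the random bipartite graph ensemble with n variables and m = ⌈μ·n^{r−1}/u(n)^{r−2}⌉ constraints, there is a constant C such that for all sufficiently large n, the probability that there exists a (k−r+2)-stopping set of size larger than n − (1+τ)·u(n) contained in {u(n)+1,…,n} is at least 1 − exp( (inf_{λ>0, τ'∈(0,τ)} φ_{k,r}(μ,λ,τ'))·u(n) + C·max{1, u(n)²/n} ); in particular this probability tends to 1 exponentially fast in u(n). -/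
open Filter Finset Asymptotics

noncomputable section

/-- Neighborhood `∂(a)` of constraint `a` in the bipartite graph given by `ω`. -/
def nbhd {n m k : ℕ} (ω : Fin m → (Fin k ↪ Fin n)) (a : Fin m) : Finset (Fin n) :=
  Finset.univ.image (ω a)

/-- `V` is a `d`-stopping set: every constraint meets `V` in `0` or at least `d` variables. -/
def IsStoppingSet {n m k : ℕ} (d : ℕ) (ω : Fin m → (Fin k ↪ Fin n))
    (V : Finset (Fin n)) : Prop :=
  ∀ a : Fin m, (nbhd ω a ∩ V).card = 0 ∨ d ≤ (nbhd ω a ∩ V).card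

/-- Probability of an event under the uniform random bipartite-graph ensemble:
each of the `m` constraints independently picks a uniformly random `k`-tuple of
distinct indices from `{1,…,n}` (an embedding `Fin k ↪ Fin n`). -/
def prG (n m k : ℕ) (P : (Fin m → (Fin k ↪ Fin n)) → Prop) : ℝ :=
  letI := Classical.decPred P
  ((Finset.univ.filter P).card : ℝ) / (Fintype.card (Fin m → (Fin k ↪ Fin n)) : ℝ)

/-- `u ∈ ω(1) ∩ o(n)`. -/
def UGood (u : ℕ → ℕ) : Prop :=
  Tendsto (fun n => (u n : ℝ)) atTop atTop ∧
    Tendsto (fun n => (u n : ℝ) / (n : ℝ)) atTop (nhds 0)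

/-- `μ_c(k,r) = binom(k,r)⁻¹ (r-2)^(r-2) / (r (r-1)^(r-1))`. -/
def muc (k r : ℕ) : ℝ :=
  ((k.choose r : ℝ))⁻¹ * (((r : ℝ) - 2) ^ (r - 2) / ((r : ℝ) * ((r : ℝ) - 1) ^ (r - 1)))

/-- `φ_{k,r}(μ,λ,τ) = μ (e^{(k-r+1)λ} - 1) binom(k,r-1) (1+τ)^{r-1} - λτ`. -/
def phiE (k r : ℕ) (μ lam τ : ℝ) : ℝ :=
  μ * (Real.exp (((k : ℝ) - (r : ℝ) + 1) * lam) - 1) * (k.choose (r - 1) : ℝ)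
      * (1 + τ) ^ (r - 1)
    - lam * τ

/-- Membership in the local marginal polytope LOCAL: each `B a` is a distribution on
`[q]^k`, each `b i` is a distribution on `[q]`, and the marginalization conditions hold. -/
def MemLOCAL {n m q k : ℕ} (nb : Fin m → (Fin k ↪ Fin n))
    (b : Fin n → Fin q → ℝ) (B : Fin m → (Fin k → Fin q) → ℝ) : Prop :=
  (∀ i x, 0 ≤ b i x) ∧ (∀ i, ∑ x, b i x = 1) ∧
  (∀ a z, 0 ≤ B a z) ∧ (∀ a, ∑ z, B a z = 1) ∧
  (∀ (a : Fin m) (j : Fin k) (x : Fin q),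
    b (nb a j) x = ∑ z : Fin k → Fin q, if z j = x then B a z else 0)

/-- A point of LOCAL is zero-optimal if each `B a` is supported on `f_a⁻¹(y_a)`. -/
def ZeroOptimal {m q k l : ℕ} (f : Fin m → (Fin k → Fin q) → (Fin l → Fin q))
    (y : Fin m → Fin l → Fin q) (B : Fin m → (Fin k → Fin q) → ℝ) : Prop :=
  ∀ a z, B a z ≠ 0 → f a z = y a

/-- Integral part of a point of LOCAL. -/
def integralPart {n q : ℕ} (b : Fin n → Fin q → ℝ) : Finset (Fin n) :=
  letI := Classical.decPred fun i : Fin n => ∃ x : Fin q, b i x = 1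
  Finset.univ.filter fun i : Fin n => ∃ x : Fin q, b i x = 1

/-- `f : [q]^k → [q]^l` is `w`-wise independent. -/
def WiseIndep (q k l w : ℕ) (f : (Fin k → Fin q) → (Fin l → Fin q)) : Prop :=
  ∀ T : Finset (Fin k), T.card ≤ w → ∀ xT : Fin k → Fin q, ∀ y : Fin l → Fin q,
    (Finset.univ.filter fun x : Fin k → Fin q =>
        (∀ i ∈ T, x i = xT i) ∧ f x = y).card
      = q ^ (k - T.card - l)

/-- Minimum Hamming distance of a code. -/
def minHammingDist {A : Type*} [DecidableEq A] {k : ℕ} (M : Finset (Fin k → A)) : ℕ :=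
  sInf {d | ∃ x ∈ M, ∃ y ∈ M, x ≠ y ∧ hammingDist x y = d}

/-- `M` is an MDS code of length `k` and dimension `r-1`. -/
def IsMDSCode (A : Type*) [Fintype A] [DecidableEq A] (k r : ℕ)
    (M : Finset (Fin k → A)) : Prop :=
  M.card = Fintype.card A ^ (r - 1) ∧ minHammingDist M = k - r + 2

/-- `f` has MDS inverse image of dimension `r-1`. -/
def HasMDSInv (q k r : ℕ) (f : (Fin k → Fin q) → (Fin (k - r + 1) → Fin q)) : Prop :=
  ∀ y : Fin (k - r + 1) → Fin q,
    IsMDSCode (Fin q) k r (Finset.univ.filter fun x => f x = y)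

instance {n m k : ℕ} (d : ℕ) (ω : Fin m → (Fin k ↪ Fin n)) :
    DecidablePred fun V : Finset (Fin n) => IsStoppingSet d ω V := fun V => by
  unfold IsStoppingSet; infer_instance

/-
A stopping set is the complement of a closed set. Call a constraint revealed by a set `S` of
variables if at least `q = r - 1` of its slots lie in `S`. If `S` contains all neighbors of the
constraints it reveals, then every other constraint has at most `q - 1` slots in `S`, hence at least
`k - r + 2` outside. So explore from the `u` forbidden variables, adding one known variable at a
time; a newly revealed constraint makes at most `k - q` new variables known.

Fix a target set of `t ≥ (1 + τ) u` variables. If the exploration has not stopped before `t` steps,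
it has exhausted `t` variables, and the `R` constraints revealed by then satisfy
`t ≤ u + (k - q) R`. Decisions about the constraints not yet revealed can be deferred: relabelling
them by a transposition that fixes the explored set is an involution of the sample space that does
not affect the exploration so far, and it exchanges the next explored variable with an element of
the target. Hence `R` is dominated by a variable distributed like the number of constraints revealed
by a fixed set of size `t`, a sum of independent indicators, and a Chernoff bound with parameter
`lam` gives the failure probability `exp (phiE k r μ lam τ * u + O(1))`.

Finally `phiE` takes a negative value because the curve `μ binom(k, r) r (1 + x)^(r - 1)` crosses
the diagonal at `τ*` with slope less than one, and by compactness the infimum is bounded below by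
the value at a single pair `(lam, τ')`, so one choice of parameters serves all `n`.
-/

open scoped BigOperators

section Exploration

lemma map_perm_eq_self {α : Type*} {σ : Equiv.Perm α} {S : Finset α} (hfix : ∀ i ∈ S, σ i = i) :
    S.map σ.toEmbedding = S := by
  classical
  exact (map_eq_image _ _).trans ((image_congr hfix).trans image_id)

lemma map_perm_map_perm {α : Type*} {σ : Equiv.Perm α} (hσ : Function.Involutive σ)
    (S : Finset α) : (S.map σ.toEmbedding).map σ.toEmbedding = S := by
  classical
  simp only [map_eq_image, image_image, Equiv.coe_toEmbedding, hσ.comp_self, image_id]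

variable {α κ ι : Type*} [DecidableEq α] [Fintype κ]

/-- Number of slots of the tuple `x` that land in `S`; as `x` is injective, this is also the number
of elements of `S` that `x` takes as a value. -/
def hits (x : κ ↪ α) (S : Finset α) : ℕ := #{j | x j ∈ S}

lemma hits_mono (x : κ ↪ α) {S T : Finset α} (h : S ⊆ T) : hits x S ≤ hits x T :=
  card_le_card (monotone_filter_right _ fun _ _ hj => h hj)

lemma card_map_inter_eq_hits (x : κ ↪ α) (S : Finset α) : #(univ.map x ∩ S) = hits x S := by
  rw [← filter_mem_eq_inter, filter_map, card_map]
  rfl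

lemma hits_add_card_map_sdiff (x : κ ↪ α) (S : Finset α) :
    hits x S + #(univ.map x \ S) = Fintype.card κ := by
  rw [← card_map_inter_eq_hits, card_inter_add_card_sdiff, card_map, card_univ]

lemma hits_trans_map {β : Type*} [DecidableEq β] (x : κ ↪ α) (f : α ↪ β) (S : Finset α) :
    hits (x.trans f) (S.map f) = hits x S := by
  simp only [hits, Function.Embedding.trans_apply, Finset.mem_map']

/-- Relabelling by `σ` of the constraints that are not revealed by `S`, where a constraint is
revealed by `S` if at least `q` of its slots land in `S`. -/
def relabel (q : ℕ) (S : Finset α) (σ : Equiv.Perm α) (ω : ι → κ ↪ α) : ι → κ ↪ α :=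
  fun a => if q ≤ hits (ω a) S then ω a else (ω a).trans σ.toEmbedding

variable {q : ℕ} {S S' T : Finset α} {σ : Equiv.Perm α} {ω : ι → κ ↪ α}

lemma relabel_of_le {a : ι} (h : q ≤ hits (ω a) S) : relabel q S σ ω a = ω a := if_pos h

lemma relabel_of_not_le {a : ι} (h : ¬ q ≤ hits (ω a) S) :
    relabel q S σ ω a = (ω a).trans σ.toEmbedding := if_neg h

lemma hits_relabel_of_subset (hfix : ∀ i ∈ S, σ i = i) (hS' : S' ⊆ S) (a : ι) :
    hits (relabel q S σ ω a) S' = hits (ω a) S' := by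
  by_cases h : q ≤ hits (ω a) S
  · rw [relabel_of_le h]
  · conv_lhs => rw [relabel_of_not_le h, ← map_perm_eq_self fun i hi => hfix i (hS' hi)]
    exact hits_trans_map _ _ _

lemma involutive_relabel (hfix : ∀ i ∈ S, σ i = i) (hσ : Function.Involutive σ) :
    Function.Involutive (relabel q S σ : (ι → κ ↪ α) → ι → κ ↪ α) := by
  intro ω
  funext a
  have hhits := hits_relabel_of_subset (q := q) (ω := ω) hfix subset_rfl a
  by_cases h : q ≤ hits (ω a) S
  · rw [relabel_of_le (hhits ▸ h), relabel_of_le h]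
  · rw [relabel_of_not_le (hhits ▸ h), relabel_of_not_le h]
    exact DFunLike.ext _ _ fun j => hσ (ω a j)

variable [Fintype ι]

/-- The set of constraints with at least `q` slots in `S`. -/
def revealed (q : ℕ) (ω : ι → κ ↪ α) (S : Finset α) : Finset ι := {a | q ≤ hits (ω a) S}

lemma mem_revealed {a : ι} : a ∈ revealed q ω S ↔ q ≤ hits (ω a) S := by simp [revealed]

lemma revealed_mono (q : ℕ) (ω : ι → κ ↪ α) (h : S ⊆ T) : revealed q ω S ⊆ revealed q ω T :=
  fun _ ha => mem_revealed.2 ((mem_revealed.1 ha).trans (hits_mono _ h))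

lemma revealed_relabel_of_subset (hfix : ∀ i ∈ S, σ i = i) (hS' : S' ⊆ S) :
    revealed q (relabel q S σ ω) S' = revealed q ω S' := by
  simp only [revealed, hits_relabel_of_subset hfix hS']

lemma revealed_relabel_of_superset (hfix : ∀ i ∈ S, σ i = i) (hσ : Function.Involutive σ)
    (hST : S ⊆ T) :
    revealed q (relabel q S σ ω) T = revealed q ω (T.map σ.toEmbedding) := by
  ext a
  simp only [mem_revealed]
  by_cases h : q ≤ hits (ω a) S
  · have hS : S ⊆ T.map σ.toEmbedding := map_perm_eq_self hfix ▸ map_subset_map.2 hST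
    rw [relabel_of_le h]
    exact iff_of_true (h.trans (hits_mono _ hST)) (h.trans (hits_mono _ hS))
  · conv_lhs => rw [relabel_of_not_le h, ← map_perm_map_perm hσ T, hits_trans_map]

/-- The variables known once `S` has been explored: those of `I`, and all neighbors of the
constraints revealed by `S`. -/
def known (I : Finset α) (q : ℕ) (ω : ι → κ ↪ α) (S : Finset α) : Finset α :=
  I ∪ (revealed q ω S).biUnion fun a => univ.map (ω a)

variable {I : Finset α}

lemma known_mono (I : Finset α) (q : ℕ) (ω : ι → κ ↪ α) (h : S ⊆ T) :
    known I q ω S ⊆ known I q ω T :=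
  union_subset_union_right (biUnion_subset_biUnion_of_subset_left _ (revealed_mono q ω h))

lemma map_subset_known {a : ι} (h : q ≤ hits (ω a) S) : univ.map (ω a) ⊆ known I q ω S :=
  (subset_biUnion_of_mem (fun a => univ.map (ω a)) (mem_revealed.2 h)).trans subset_union_right

lemma known_empty (I : Finset α) (hq : 0 < q) (ω : ι → κ ↪ α) : known I q ω ∅ = I := by
  simp [known, revealed, hits, hq.ne']

lemma known_relabel_of_subset (hfix : ∀ i ∈ S, σ i = i) (hS' : S' ⊆ S) :
    known I q (relabel q S σ ω) S' = known I q ω S' := by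
  rw [known, known, revealed_relabel_of_subset hfix hS']
  congr 1
  refine biUnion_congr rfl fun a ha => ?_
  rw [relabel_of_le ((mem_revealed.1 ha).trans (hits_mono _ hS'))]

lemma known_sdiff_known_subset [DecidableEq ι] :
    known I q ω S' \ known I q ω S ⊆
      (revealed q ω S' \ revealed q ω S).biUnion fun a => univ.map (ω a) \ known I q ω S := by
  intro i hi
  obtain ⟨hiS', hiS⟩ := mem_sdiff.1 hi
  have hiI : i ∉ I := fun h => hiS (mem_union_left _ h)
  obtain ⟨a, ha, hia⟩ := mem_biUnion.1 ((mem_union.1 hiS').resolve_left hiI)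
  have haS : a ∉ revealed q ω S := fun h => hiS (map_subset_known (mem_revealed.1 h) hia)
  exact mem_biUnion.2 ⟨a, mem_sdiff.2 ⟨ha, haS⟩, mem_sdiff.2 ⟨hia, hiS⟩⟩

lemma card_known_add_le (hSS' : S ⊆ S') (hS' : S' ⊆ known I q ω S) :
    #(known I q ω S') + (Fintype.card κ - q) * #(revealed q ω S) ≤
      #(known I q ω S) + (Fintype.card κ - q) * #(revealed q ω S') := by
  classical
  have hnew : #(known I q ω S' \ known I q ω S) ≤
      #(revealed q ω S' \ revealed q ω S) * (Fintype.card κ - q) := by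
    refine (card_le_card known_sdiff_known_subset).trans (card_biUnion_le_card_mul _ _ _ ?_)
    intro a ha
    -- A newly revealed constraint has `q` of its slots in `S'`, whose elements are known already.
    have hq : q ≤ hits (ω a) S' := mem_revealed.1 (mem_sdiff.1 ha).1
    have hmono := hits_mono (ω a) hS'
    have hsplit := hits_add_card_map_sdiff (ω a) (known I q ω S)
    omega
  rw [← card_sdiff_add_card_eq_card (known_mono I q ω hSS'),
    ← card_sdiff_add_card_eq_card (revealed_mono q ω hSS')]
  linarith

section Step

variable {K : Finset α}

/-- One step of the exploration, from the explored set `S` towards the target set `T`, when the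
variables in `K` are known: a known unexplored variable is added to `S`, and is exchanged with an
unexplored element of `T` by the transposition returned along with the new explored set. -/
def exploreStep (K S T : Finset α) : Finset α × Equiv.Perm α :=
  if h : (K \ S).Nonempty ∧ (T \ S).Nonempty then
    (insert h.1.choose S, Equiv.swap h.1.choose h.2.choose)
  else (S, 1)

lemma exploreStep_eq_or (K S T : Finset α) :
    ((K ⊆ S ∨ T ⊆ S) ∧ exploreStep K S T = (S, 1)) ∨
      ∃ v ∈ K \ S, ∃ w ∈ T \ S, exploreStep K S T = (insert v S, Equiv.swap v w) := by
  by_cases h : (K \ S).Nonempty ∧ (T \ S).Nonempty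
  · exact Or.inr ⟨_, h.1.choose_spec, _, h.2.choose_spec, dif_pos h⟩
  · refine Or.inl ⟨?_, dif_neg h⟩
    simpa only [not_and_or, not_nonempty_iff_eq_empty, sdiff_eq_empty_iff_subset] using h

lemma subset_exploreStep_fst (K S T : Finset α) : S ⊆ (exploreStep K S T).1 := by
  obtain ⟨-, h⟩ | ⟨v, -, w, -, h⟩ := exploreStep_eq_or K S T
  · rw [h]
  · simp only [h, subset_insert]

lemma exploreStep_fst_subset (hSK : S ⊆ K) (T : Finset α) : (exploreStep K S T).1 ⊆ K := by
  obtain ⟨-, h⟩ | ⟨v, hv, w, -, h⟩ := exploreStep_eq_or K S T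
  · rwa [h]
  · simpa only [h] using insert_subset (mem_sdiff.1 hv).1 hSK

lemma exploreStep_snd_apply_of_mem (K T : Finset α) : ∀ i ∈ S, (exploreStep K S T).2 i = i := by
  intro i hi
  obtain ⟨-, h⟩ | ⟨v, hv, w, hw, h⟩ := exploreStep_eq_or K S T
  · rw [h, Equiv.Perm.one_apply]
  · rw [h]
    exact Equiv.swap_apply_of_ne_of_ne (ne_of_mem_of_not_mem hi (mem_sdiff.1 hv).2)
      (ne_of_mem_of_not_mem hi (mem_sdiff.1 hw).2)

lemma involutive_exploreStep_snd (K S T : Finset α) :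
    Function.Involutive (exploreStep K S T).2 := by
  obtain ⟨-, h⟩ | ⟨v, -, w, -, h⟩ := exploreStep_eq_or K S T <;> rw [h]
  · exact fun _ => rfl
  · exact DFunLike.congr_fun (Equiv.swap_swap v w)

lemma exploreStep_fst_subset_map (K : Finset α) (hST : S ⊆ T) :
    (exploreStep K S T).1 ⊆ T.map (exploreStep K S T).2.toEmbedding := by
  have hS : S ⊆ T.map (exploreStep K S T).2.toEmbedding :=
    (map_perm_eq_self (exploreStep_snd_apply_of_mem K T)).symm.subset.trans (map_subset_map.2 hST)
  obtain ⟨-, h⟩ | ⟨v, -, w, hw, h⟩ := exploreStep_eq_or K S T <;> rw [h] at hS ⊢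
  · exact hS
  · exact insert_subset (mem_map.2 ⟨w, (mem_sdiff.1 hw).1, Equiv.swap_apply_right v w⟩) hS

end Step

/-- The explored set and the target set after a number of exploration steps. The explored set starts
empty. The target set starts as `T` and always contains the explored set, so that after `#T` steps
either no unexplored variable is known or the two sets coincide. -/
def explore (I : Finset α) (q : ℕ) (ω : ι → κ ↪ α) (T : Finset α) : ℕ → Finset α × Finset α
  | 0 => (∅, T)
  | s + 1 =>
    let p := explore I q ω T s
    let step := exploreStep (known I q ω p.1) p.1 p.2
    (step.1, p.2.map step.2.toEmbedding)

lemma explore_fst_mono (I : Finset α) (q : ℕ) (ω : ι → κ ↪ α) (T : Finset α) :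
    Monotone fun s => (explore I q ω T s).1 :=
  monotone_nat_of_le_succ fun _ => subset_exploreStep_fst _ _ _

lemma explore_fst_subset_snd (I : Finset α) (q : ℕ) (ω : ι → κ ↪ α) (T : Finset α) :
    ∀ s, (explore I q ω T s).1 ⊆ (explore I q ω T s).2
  | 0 => empty_subset _
  | s + 1 => exploreStep_fst_subset_map _ (explore_fst_subset_snd I q ω T s)

lemma card_explore_snd (I : Finset α) (q : ℕ) (ω : ι → κ ↪ α) (T : Finset α) :
    ∀ s, #(explore I q ω T s).2 = #T
  | 0 => rfl
  | s + 1 => (card_map _).trans (card_explore_snd I q ω T s)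

lemma explore_fst_subset_known (I : Finset α) (q : ℕ) (ω : ι → κ ↪ α) (T : Finset α) :
    ∀ s, (explore I q ω T s).1 ⊆ known I q ω (explore I q ω T s).1
  | 0 => empty_subset _
  | s + 1 => (exploreStep_fst_subset (explore_fst_subset_known I q ω T s) _).trans
      (known_mono I q ω (subset_exploreStep_fst _ _ _))

lemma card_known_explore_le (I : Finset α) (hq : 0 < q) (ω : ι → κ ↪ α) (T : Finset α) (s : ℕ) :
    #(known I q ω (explore I q ω T s).1) ≤
      #I + (Fintype.card κ - q) * #(revealed q ω (explore I q ω T s).1) := by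
  induction s with
  | zero => exact (congrArg card (known_empty I hq ω)).le.trans (Nat.le_add_right _ _)
  | succ s ih =>
    have hstep : #(known I q ω (explore I q ω T (s + 1)).1) +
          (Fintype.card κ - q) * #(revealed q ω (explore I q ω T s).1) ≤
        #(known I q ω (explore I q ω T s).1) +
          (Fintype.card κ - q) * #(revealed q ω (explore I q ω T (s + 1)).1) :=
      card_known_add_le (subset_exploreStep_fst _ _ _)
        (exploreStep_fst_subset (explore_fst_subset_known I q ω T s) _)
    omega

lemma le_card_explore_or (I : Finset α) (q : ℕ) (ω : ι → κ ↪ α) (T : Finset α) (s : ℕ) :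
    s ≤ #(explore I q ω T s).1 ∨
      known I q ω (explore I q ω T s).1 ⊆ (explore I q ω T s).1 ∨
      (explore I q ω T s).2 ⊆ (explore I q ω T s).1 := by
  induction s with
  | zero => exact Or.inl (Nat.zero_le _)
  | succ s ih =>
    obtain ⟨hstuck, h⟩ | ⟨v, hv, w, hw, h⟩ := exploreStep_eq_or
      (known I q ω (explore I q ω T s).1) (explore I q ω T s).1 (explore I q ω T s).2
    · have heq : explore I q ω T (s + 1) = explore I q ω T s := by
        simp only [explore, h]
        exact Prod.ext rfl map_refl
      exact Or.inr (heq ▸ hstuck)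
    · left
      have hle : s ≤ #(explore I q ω T s).1 := ih.resolve_right <| not_or.2
        ⟨fun hK => (mem_sdiff.1 hv).2 (hK (mem_sdiff.1 hv).1),
          fun hT => (mem_sdiff.1 hw).2 (hT (mem_sdiff.1 hw).1)⟩
      simp only [explore, h]
      rw [card_insert_of_notMem (mem_sdiff.1 hv).2]
      omega

lemma known_explore_subset_or_eq (I : Finset α) (q : ℕ) (ω : ι → κ ↪ α) (T : Finset α) :
    known I q ω (explore I q ω T #T).1 ⊆ (explore I q ω T #T).1 ∨
      (explore I q ω T #T).1 = (explore I q ω T #T).2 := by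
  have hsub := explore_fst_subset_snd I q ω T #T
  obtain hle | hknown | hT := le_card_explore_or I q ω T #T
  · exact Or.inr (eq_of_subset_of_card_le hsub ((card_explore_snd I q ω T #T).trans_le hle))
  · exact Or.inl hknown
  · exact Or.inr (hsub.antisymm hT)

/-- The relabelling that carries the target set after `s` exploration steps to the one after
`s + 1` steps, without affecting the first `s` steps. -/
def exploreRelabel (I : Finset α) (q : ℕ) (T : Finset α) (s : ℕ) (ω : ι → κ ↪ α) :
    ι → κ ↪ α :=
  let p := explore I q ω T s
  relabel q p.1 (exploreStep (known I q ω p.1) p.1 p.2).2 ω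

lemma explore_exploreRelabel (I : Finset α) (q : ℕ) (ω : ι → κ ↪ α) (T : Finset α) {i s : ℕ}
    (his : i ≤ s) : explore I q (exploreRelabel I q T s ω) T i = explore I q ω T i := by
  induction i with
  | zero => rfl
  | succ i ih =>
    have hknown : known I q (exploreRelabel I q T s ω) (explore I q ω T i).1 =
        known I q ω (explore I q ω T i).1 :=
      known_relabel_of_subset (exploreStep_snd_apply_of_mem _ _)
        (explore_fst_mono I q ω T (Nat.le_of_succ_le his))
    simp only [explore, ih (Nat.le_of_succ_le his), hknown]

lemma involutive_exploreRelabel (I : Finset α) (q : ℕ) (T : Finset α) (s : ℕ) :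
    Function.Involutive (exploreRelabel I q T s : (ι → κ ↪ α) → ι → κ ↪ α) := by
  intro ω
  have hfix := exploreStep_snd_apply_of_mem (S := (explore I q ω T s).1)
    (known I q ω (explore I q ω T s).1) (explore I q ω T s).2
  have hknown : known I q (exploreRelabel I q T s ω) (explore I q ω T s).1 =
      known I q ω (explore I q ω T s).1 := known_relabel_of_subset hfix subset_rfl
  rw [exploreRelabel, explore_exploreRelabel I q ω T le_rfl, hknown]
  exact involutive_relabel hfix (involutive_exploreStep_snd _ _ _) ω

lemma revealed_exploreRelabel (I : Finset α) (q : ℕ) (ω : ι → κ ↪ α) (T : Finset α) (s : ℕ) :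
    revealed q (exploreRelabel I q T s ω) (explore I q ω T s).2 =
      revealed q ω (explore I q ω T (s + 1)).2 :=
  revealed_relabel_of_superset (exploreStep_snd_apply_of_mem _ _)
    (involutive_exploreStep_snd _ _ _) (explore_fst_subset_snd I q ω T s)

lemma expect_revealed_explore [Fintype α] [DecidableEq ι] {M : Type*}
    [AddCommMonoid M] [Module ℚ≥0 M] (I : Finset α) (q : ℕ) (T : Finset α) (f : Finset ι → M)
    (s : ℕ) :
    𝔼 ω : ι → κ ↪ α, f (revealed q ω (explore I q ω T s).2) =
      𝔼 ω : ι → κ ↪ α, f (revealed q ω T) := by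
  induction s with
  | zero => rfl
  | succ s ih =>
    rw [← ih]
    refine Fintype.expect_bijective _ (involutive_exploreRelabel I q T s).bijective _ _ fun ω => ?_
    rw [explore_exploreRelabel I q ω T le_rfl, revealed_exploreRelabel]

end Exploration

section Counting

variable {α κ : Type*} [DecidableEq α]

lemma involutive_swapValue (i : κ) : Function.Involutive
    fun p : (κ ↪ α) × α => (p.1.trans (Equiv.swap (p.1 i) p.2).toEmbedding, p.1 i) := by
  rintro ⟨x, z⟩
  refine Prod.ext (DFunLike.ext _ _ fun j => ?_) ?_ <;>
    simp [Equiv.swap_comm z (x i)]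

variable [Fintype α] [Fintype κ]

lemma expect_pow_card_revealed (m q : ℕ) (T : Finset α) (w : ℝ) :
    𝔼 ω : Fin m → κ ↪ α, w ^ #(revealed q ω T) =
      (𝔼 x : κ ↪ α, if q ≤ hits x T then w else 1) ^ m := by
  rw [expect_pow, Fintype.piFinset_univ]
  refine expect_congr rfl fun ω _ => ?_
  rw [prod_ite, prod_const, prod_const_one, mul_one, revealed]

lemma card_filter_mem_mul_card_compl_le (T : Finset α) {R : Finset κ} {i : κ} (hi : i ∉ R) :
    #{x : κ ↪ α | x i ∈ T ∧ ∀ j ∈ R, x j ∈ T} * #Tᶜ ≤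
      #{x : κ ↪ α | x i ∉ T ∧ ∀ j ∈ R, x j ∈ T} * #T := by
  rw [← card_product, ← card_product]
  refine card_le_card_of_injOn _ ?_ (involutive_swapValue i).injective.injOn
  rintro ⟨x, z⟩ hxz
  simp only [coe_product, Set.mem_prod, mem_coe, mem_filter, mem_univ, true_and, mem_compl,
    Function.Embedding.trans_apply, Equiv.coe_toEmbedding, Equiv.swap_apply_left] at hxz ⊢
  obtain ⟨⟨hxi, hxR⟩, hz⟩ := hxz
  refine ⟨⟨hz, fun j hj => ?_⟩, hxi⟩
  rw [Equiv.swap_apply_of_ne_of_ne (x.injective.ne (ne_of_mem_of_not_mem hj hi))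
    (ne_of_mem_of_not_mem (hxR j hj) hz)]
  exact hxR j hj

lemma card_filter_mem_mul_card_le (T : Finset α) {R : Finset κ} {i : κ} (hi : i ∉ R) :
    #{x : κ ↪ α | x i ∈ T ∧ ∀ j ∈ R, x j ∈ T} * Fintype.card α ≤
      #{x : κ ↪ α | ∀ j ∈ R, x j ∈ T} * #T := by
  have hsplit : #{x : κ ↪ α | x i ∈ T ∧ ∀ j ∈ R, x j ∈ T} +
      #{x : κ ↪ α | x i ∉ T ∧ ∀ j ∈ R, x j ∈ T} = #{x : κ ↪ α | ∀ j ∈ R, x j ∈ T} := by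
    simp only [and_comm (b := ∀ j ∈ R, _), ← filter_filter]
    exact card_filter_add_card_filter_not _
  rw [← hsplit, ← card_add_card_compl T, mul_add, add_mul]
  exact Nat.add_le_add_left (card_filter_mem_mul_card_compl_le T hi) _

lemma card_filter_forall_mem_mul_pow_le (T : Finset α) (R : Finset κ) :
    #{x : κ ↪ α | ∀ j ∈ R, x j ∈ T} * Fintype.card α ^ #R ≤
      Fintype.card (κ ↪ α) * #T ^ #R := by
  induction R using Finset.cons_induction_on with
  | empty => simp
  | cons i R hi ih =>
    have hcons : #{x : κ ↪ α | ∀ j ∈ cons i R hi, x j ∈ T} =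
        #{x : κ ↪ α | x i ∈ T ∧ ∀ j ∈ R, x j ∈ T} :=
      congrArg card (filter_congr fun x _ => forall_mem_cons hi fun j => x j ∈ T)
    rw [hcons, card_cons]
    calc #{x : κ ↪ α | x i ∈ T ∧ ∀ j ∈ R, x j ∈ T} * Fintype.card α ^ (#R + 1)
      _ = #{x : κ ↪ α | x i ∈ T ∧ ∀ j ∈ R, x j ∈ T} * Fintype.card α * Fintype.card α ^ #R := by
        rw [pow_succ', mul_assoc]
      _ ≤ #{x : κ ↪ α | ∀ j ∈ R, x j ∈ T} * #T * Fintype.card α ^ #R :=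
        Nat.mul_le_mul_right _ (card_filter_mem_mul_card_le T hi)
      _ = #{x : κ ↪ α | ∀ j ∈ R, x j ∈ T} * Fintype.card α ^ #R * #T :=
        mul_right_comm _ _ _
      _ ≤ Fintype.card (κ ↪ α) * #T ^ #R * #T := Nat.mul_le_mul_right _ ih
      _ = Fintype.card (κ ↪ α) * #T ^ (#R + 1) := by rw [pow_succ, mul_assoc]

lemma card_filter_le_hits_mul_pow_le (q : ℕ) (T : Finset α) :
    #{x : κ ↪ α | q ≤ hits x T} * Fintype.card α ^ q ≤
      Fintype.card (κ ↪ α) * ((Fintype.card κ).choose q * #T ^ q) := by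
  have := Classical.decEq (κ ↪ α)
  have hcover : ({x : κ ↪ α | q ≤ hits x T} : Finset (κ ↪ α)) ⊆
      (powersetCard q univ).biUnion fun R : Finset κ => {x : κ ↪ α | ∀ j ∈ R, x j ∈ T} := by
    intro x hx
    obtain ⟨R, hR, hRq⟩ := exists_subset_card_eq (mem_filter.1 hx).2
    exact mem_biUnion.2 ⟨R, mem_powersetCard.2 ⟨subset_univ R, hRq⟩,
      mem_filter.2 ⟨mem_univ x, fun j hj => (mem_filter.1 (hR hj)).2⟩⟩
  calc #{x : κ ↪ α | q ≤ hits x T} * Fintype.card α ^ q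
    _ ≤ ∑ R ∈ powersetCard q (univ : Finset κ),
        #{x : κ ↪ α | ∀ j ∈ R, x j ∈ T} * Fintype.card α ^ q := by
      rw [← sum_mul]
      exact Nat.mul_le_mul_right _ ((card_le_card hcover).trans card_biUnion_le)
    _ ≤ ∑ _ ∈ powersetCard q (univ : Finset κ), Fintype.card (κ ↪ α) * #T ^ q :=
      sum_le_sum fun R hR => (mem_powersetCard.1 hR).2 ▸ card_filter_forall_mem_mul_pow_le T R
    _ = Fintype.card (κ ↪ α) * ((Fintype.card κ).choose q * #T ^ q) := by
      rw [sum_const, card_powersetCard, card_univ, smul_eq_mul, mul_left_comm]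

lemma expect_ite_le_hits_le [Nonempty α] [Nonempty (κ ↪ α)] (q : ℕ) (T : Finset α) {w : ℝ}
    (hw : 1 ≤ w) :
    𝔼 x : κ ↪ α, (if q ≤ hits x T then w else 1) ≤
      1 + (w - 1) * ((Fintype.card κ).choose q * (#T / Fintype.card α : ℝ) ^ q) := by
  have hdens : (#{x : κ ↪ α | q ≤ hits x T} : ℝ) / Fintype.card (κ ↪ α) ≤
      (Fintype.card κ).choose q * (#T / Fintype.card α : ℝ) ^ q := by
    have hα : (0 : ℝ) < Fintype.card α := Nat.cast_pos.2 Fintype.card_pos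
    have hκα : (0 : ℝ) < Fintype.card (κ ↪ α) := Nat.cast_pos.2 Fintype.card_pos
    rw [div_pow, ← mul_div_assoc, div_le_div_iff₀ hκα (pow_pos hα q),
      mul_comm _ (Fintype.card (κ ↪ α) : ℝ)]
    exact_mod_cast card_filter_le_hits_mul_pow_le q T
  calc 𝔼 x : κ ↪ α, (if q ≤ hits x T then w else 1)
    _ = 𝔼 x : κ ↪ α, (1 + (w - 1) * if q ≤ hits x T then 1 else 0) :=
      expect_congr rfl fun x _ => by split_ifs <;> ring
    _ = 1 + (w - 1) * (#{x : κ ↪ α | q ≤ hits x T} / Fintype.card (κ ↪ α)) := by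
      rw [expect_add_distrib, Fintype.expect_const, ← mul_expect,
        Fintype.expect_eq_sum_div_card, sum_boole]
    _ ≤ 1 + (w - 1) * ((Fintype.card κ).choose q * (#T / Fintype.card α : ℝ) ^ q) := by
      gcongr

lemma expect_pow_card_revealed_explore_le [Nonempty α] [Nonempty (κ ↪ α)] (I : Finset α)
    (q m : ℕ) (T : Finset α) {w : ℝ} (hw : 1 ≤ w) (s : ℕ) :
    𝔼 ω : Fin m → κ ↪ α, w ^ #(revealed q ω (explore I q ω T s).2) ≤
      Real.exp (m * ((w - 1) *
        ((Fintype.card κ).choose q * (#T / Fintype.card α : ℝ) ^ q))) := by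
  rw [Real.exp_nat_mul, expect_revealed_explore I q T (fun R => w ^ #R), expect_pow_card_revealed]
  gcongr
  exact (expect_ite_le_hits_le q T hw).trans ((add_comm _ _).trans_le (Real.add_one_le_exp _))

end Counting

section Ensemble

variable {n m k q d U : ℕ} {ω : Fin m → Fin k ↪ Fin n}

lemma nbhd_eq_map (ω : Fin m → Fin k ↪ Fin n) (a : Fin m) : nbhd ω a = univ.map (ω a) :=
  (map_eq_image _ _).symm

/-- There is a `d`-stopping set with more than `x` variables, all of them outside `{1, …, U}`.
Variables are indexed from `0`, so these are the ones whose index is at least `U`. -/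
def HasLargeStoppingSet (d U : ℕ) (x : ℝ) (ω : Fin m → Fin k ↪ Fin n) : Prop :=
  ∃ V : Finset (Fin n), (∀ i ∈ V, U ≤ (i : ℕ)) ∧ x < #V ∧ IsStoppingSet d ω V

lemma HasLargeStoppingSet.mono {x y : ℝ} (hxy : y ≤ x) (h : HasLargeStoppingSet d U x ω) :
    HasLargeStoppingSet d U y ω :=
  h.imp fun _ hV => hV.imp_right (And.imp_left hxy.trans_lt)

lemma hasLargeStoppingSet_of_neg {x : ℝ} (hx : x < 0) (ω : Fin m → Fin k ↪ Fin n) :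
    HasLargeStoppingSet d U x ω :=
  ⟨∅, by simp, by simpa using hx, fun a => Or.inl (by simp)⟩

lemma isStoppingSet_compl_of_known_subset {I S : Finset (Fin n)} (h : known I q ω S ⊆ S) :
    IsStoppingSet (k - q + 1) ω Sᶜ := by
  intro a
  have hcard : hits (ω a) S + #(univ.map (ω a) \ S) = k := by
    rw [hits_add_card_map_sdiff, Fintype.card_fin]
  rw [nbhd_eq_map, ← sdiff_eq_inter_compl]
  by_cases ha : q ≤ hits (ω a) S
  · exact Or.inl (card_eq_zero.2 (sdiff_eq_empty_iff_subset.2 ((map_subset_known ha).trans h)))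
  · omega

lemma hasLargeStoppingSet_or_card_le {I T : Finset (Fin n)} (hI : ∀ i, i ∈ I ↔ (i : ℕ) < U)
    (hq : 0 < q) (ω : Fin m → Fin k ↪ Fin n) :
    HasLargeStoppingSet (k - q + 1) U (n - #T) ω ∨
      #T ≤ #I + (k - q) * #(revealed q ω (explore I q ω T #T).2) := by
  have hcard := card_explore_snd I q ω T #T
  by_cases heq : (explore I q ω T #T).1 = (explore I q ω T #T).2
  · right
    have hle := card_le_card (explore_fst_subset_known I q ω T #T)
    have hknown := card_known_explore_le I hq ω T #T
    rw [Fintype.card_fin] at hknown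
    rw [← heq] at hcard ⊢
    exact hcard.symm.trans_le (hle.trans hknown)
  · left
    set S := (explore I q ω T #T).1
    have hknown : known I q ω S ⊆ S := (known_explore_subset_or_eq I q ω T).resolve_right heq
    have hlt : #S < #T :=
      hcard ▸ card_lt_card ((explore_fst_subset_snd I q ω T #T).ssubset_of_ne heq)
    refine ⟨Sᶜ, fun i hi => ?_, ?_, isStoppingSet_compl_of_known_subset hknown⟩
    · by_contra hiU
      exact mem_compl.1 hi (hknown (mem_union_left _ ((hI i).2 (not_le.1 hiU))))
    · have hn : (#S : ℝ) + #Sᶜ = n := mod_cast (card_add_card_compl S).trans (Fintype.card_fin n)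
      have hlt' : (#S : ℝ) < #T := mod_cast hlt
      linarith

lemma prG_eq_expect (P : (Fin m → Fin k ↪ Fin n) → Prop) [DecidablePred P] :
    prG n m k P = 𝔼 ω, if P ω then 1 else 0 := by
  rw [Fintype.expect_eq_sum_div_card, sum_boole, prG]
  congr!

lemma one_sub_expect_div_le_prG [Nonempty (Fin k ↪ Fin n)] {c : ℝ} (hc : 0 < c)
    {f : (Fin m → Fin k ↪ Fin n) → ℝ} (hf : ∀ ω, 0 ≤ f ω)
    {P : (Fin m → Fin k ↪ Fin n) → Prop} (hP : ∀ ω, ¬ P ω → c ≤ f ω) :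
    1 - (𝔼 ω, f ω) / c ≤ prG n m k P := by
  classical
  have hone : 1 - (𝔼 ω, f ω) / c = 𝔼 ω, (1 - f ω / c) := by
    rw [expect_sub_distrib, Fintype.expect_const, expect_div]
  rw [hone, prG_eq_expect]
  refine expect_le_expect fun ω _ => ?_
  split_ifs with h
  · exact sub_le_self _ (div_nonneg (hf ω) hc.le)
  · exact sub_nonpos.2 ((one_le_div hc).2 (hP ω h))

lemma one_le_prG [Nonempty (Fin k ↪ Fin n)] {P : (Fin m → Fin k ↪ Fin n) → Prop}
    (hP : ∀ ω, P ω) : 1 ≤ prG n m k P := by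
  simpa using one_sub_expect_div_le_prG (f := 0) one_pos (fun _ => le_rfl)
    fun ω hω => (hω (hP ω)).elim

lemma prG_mono {P Q : (Fin m → Fin k ↪ Fin n) → Prop} (h : ∀ ω, P ω → Q ω) :
    prG n m k P ≤ prG n m k Q := by
  classical
  simp only [prG_eq_expect]
  refine expect_le_expect fun ω _ => ?_
  split_ifs with hP hQ hQ
  exacts [le_rfl, (hQ (h ω hP)).elim, zero_le_one, le_rfl]

lemma one_sub_exp_le_prG_hasLargeStoppingSet {t : ℕ} (hq : 0 < q) (hqn : q ≤ n) (hkn : k ≤ n)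
    (htn : t ≤ n) {lam : ℝ} (hlam : 0 ≤ lam) :
    1 - Real.exp (-lam * (t - U) + m * ((Real.exp (lam * (k - q : ℕ)) - 1) *
        (k.choose q * (t / n : ℝ) ^ q))) ≤
      prG n m k (HasLargeStoppingSet (k - q + 1) U (n - t)) := by
  have : Nonempty (Fin k ↪ Fin n) := ⟨Fin.castLEEmb hkn⟩
  have : NeZero n := ⟨(hq.trans_le hqn).ne'⟩
  obtain ⟨T, -, rfl⟩ :=
    exists_subset_card_eq (s := (univ : Finset (Fin n))) (htn.trans_eq (card_fin n).symm)
  set I : Finset (Fin n) := {i | (i : ℕ) < U}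
  have hIU : #I ≤ U := Fin.card_filter_val_lt.trans_le (min_le_right _ _)
  set w := Real.exp (lam * (k - q : ℕ)) with hw
  have hw1 : 1 ≤ w := Real.one_le_exp (by positivity)
  let N (ω : Fin m → Fin k ↪ Fin n) : ℕ := #(revealed q ω (explore I q ω T #T).2)
  have hfail (ω : Fin m → Fin k ↪ Fin n)
      (hω : ¬ HasLargeStoppingSet (k - q + 1) U (n - #T) ω) :
      Real.exp (lam * (#T - U)) ≤ w ^ N ω := by
    have hle : #T ≤ U + (k - q) * N ω :=
      ((hasLargeStoppingSet_or_card_le (I := I) (by simp [I]) hq ω).resolve_left hω).trans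
        (Nat.add_le_add_right hIU _)
    have hle' : (#T : ℝ) ≤ U + (k - q : ℕ) * N ω := mod_cast hle
    rw [hw, ← Real.exp_nat_mul, Real.exp_le_exp, mul_left_comm, mul_comm (N ω : ℝ)]
    gcongr
    linarith
  have hmean : 𝔼 ω, w ^ N ω ≤ Real.exp (m * ((w - 1) * (k.choose q * (#T / n : ℝ) ^ q))) := by
    simpa only [Fintype.card_fin] using
      expect_pow_card_revealed_explore_le (κ := Fin k) I q m T hw1 #T
  calc 1 - Real.exp (-lam * (#T - U) + m * ((w - 1) * (k.choose q * (#T / n : ℝ) ^ q)))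
    _ ≤ 1 - (𝔼 ω, w ^ N ω) / Real.exp (lam * (#T - U)) := by
      rw [neg_mul, neg_add_eq_sub, Real.exp_sub]
      gcongr
    _ ≤ _ := one_sub_expect_div_le_prG (Real.exp_pos _) (fun ω => by positivity) hfail

end Ensemble

section Exponent

lemma one_add_pow_le_one_add_mul {h : ℝ} (h0 : 0 ≤ h) (h1 : h ≤ 1) (q : ℕ) :
    (1 + h) ^ q ≤ 1 + (2 ^ q - 1) * h := by
  have hconv := (convexOn_pow q).2 (Set.mem_Ici.2 zero_le_one) (Set.mem_Ici.2 zero_le_two)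
    (sub_nonneg.2 h1) h0 (sub_add_cancel 1 h)
  simp only [smul_eq_mul, one_pow] at hconv
  calc (1 + h) ^ q = ((1 - h) * 1 + h * 2) ^ q := by ring
    _ ≤ (1 - h) * 1 + h * 2 ^ q := hconv
    _ = 1 + (2 ^ q - 1) * h := by ring

lemma mul_div_pow_succ_le {μ c U n t M : ℝ} {p : ℕ} (hμ : 0 ≤ μ) (hc : 0 ≤ c) (hU : 1 ≤ U)
    (hn : 0 < n) (ht : 0 ≤ t) (htn : t ≤ n) (htU : t ≤ c * (U + 1))
    (hM : M ≤ μ * n ^ (p + 1) / U ^ p + 1) :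
    M * (t / n) ^ (p + 1) ≤ μ * c ^ (p + 1) * U + (μ * c ^ (p + 1) * (2 ^ (p + 1) - 1) + 1) := by
  have hU0 : 0 < U := zero_lt_one.trans_le hU
  calc M * (t / n) ^ (p + 1)
    _ ≤ (μ * n ^ (p + 1) / U ^ p + 1) * (t / n) ^ (p + 1) := by gcongr
    _ = μ * t ^ (p + 1) / U ^ p + (t / n) ^ (p + 1) := by
      rw [div_pow]
      field_simp
    _ ≤ μ * (c * (U + 1)) ^ (p + 1) / U ^ p + 1 := by
      gcongr
      exact pow_le_one₀ (div_nonneg ht hn.le) ((div_le_one hn).2 htn)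
    _ = μ * c ^ (p + 1) * U * (1 + 1 / U) ^ (p + 1) + 1 := by
      rw [show U + 1 = U * (1 + 1 / U) by field_simp, mul_pow, mul_pow, pow_succ U p]
      generalize (1 + 1 / U) ^ (p + 1) = y
      field_simp
    _ ≤ μ * c ^ (p + 1) * U * (1 + (2 ^ (p + 1) - 1) * (1 / U)) + 1 := by
      gcongr
      exact one_add_pow_le_one_add_mul (by positivity) ((div_le_one hU0).2 hU) _
    _ = μ * c ^ (p + 1) * U + (μ * c ^ (p + 1) * (2 ^ (p + 1) - 1) + 1) := by
      field_simp
      ring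

/-- Bound on the error in the exponent `phiE k r μ lam τ * U` that comes from rounding the number
of constraints and the size `(1 + τ) * U` of the explored set up to integers. -/
def roundingError (k r : ℕ) (μ lam τ : ℝ) : ℝ :=
  (Real.exp (((k : ℝ) - r + 1) * lam) - 1) * k.choose (r - 1) *
    (μ * (1 + τ) ^ (r - 1) * (2 ^ (r - 1) - 1) + 1)

variable {k r n m U : ℕ} {μ lam τ : ℝ}

lemma exp_mul_sub_one_nonneg (hrk : r ≤ k) (hlam : 0 ≤ lam) :
    0 ≤ Real.exp (((k : ℝ) - r + 1) * lam) - 1 := by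
  have hrk' : (r : ℝ) ≤ k := mod_cast hrk
  exact sub_nonneg.2 (Real.one_le_exp (mul_nonneg (by linarith) hlam))

lemma roundingError_nonneg (hrk : r ≤ k) (hμ : 0 ≤ μ) (hlam : 0 ≤ lam) (hτ : 0 ≤ τ) :
    0 ≤ roundingError k r μ lam τ := by
  have hpow : (0 : ℝ) ≤ 2 ^ (r - 1) - 1 := sub_nonneg.2 (one_le_pow₀ one_le_two)
  have hexp := exp_mul_sub_one_nonneg hrk hlam
  unfold roundingError
  positivity

lemma HasLargeStoppingSet.of_sub_ceil {d : ℕ} {x : ℝ} {ω : Fin m → Fin k ↪ Fin n}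
    (h : HasLargeStoppingSet d U (n - ⌈x⌉₊) ω) : HasLargeStoppingSet d U (n - x) ω := by
  obtain ⟨V, hVU, hlt, hV⟩ := h
  have hVn : #V ≤ n := (card_le_univ V).trans_eq (Fintype.card_fin n)
  have hceil : n - #V < ⌈x⌉₊ := by
    rw [sub_lt_iff_lt_add] at hlt
    have : n < #V + ⌈x⌉₊ := mod_cast hlt
    omega
  have hx := Nat.lt_ceil.1 hceil
  rw [Nat.cast_sub hVn] at hx
  exact ⟨V, hVU, sub_lt_comm.1 hx, hV⟩

lemma exponent_le_phiE_mul_add_roundingError (hr : 2 ≤ r) (hrk : r ≤ k) (hn : 0 < n) (hU : 1 ≤ U)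
    (hμ : 0 ≤ μ) (hlam : 0 ≤ lam) (hτ : 0 ≤ τ) (htn : ⌈(1 + τ) * (U : ℝ)⌉₊ ≤ n)
    (hm : m = ⌈μ * (n : ℝ) ^ (r - 1) / (U : ℝ) ^ (r - 2)⌉₊) :
    -lam * (⌈(1 + τ) * (U : ℝ)⌉₊ - U) + m * ((Real.exp (((k : ℝ) - r + 1) * lam) - 1) *
        (k.choose (r - 1) * (⌈(1 + τ) * (U : ℝ)⌉₊ / n : ℝ) ^ (r - 1))) ≤
      phiE k r μ lam τ * U + roundingError k r μ lam τ := by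
  have ht : (1 + τ) * (U : ℝ) ≤ ⌈(1 + τ) * (U : ℝ)⌉₊ := Nat.le_ceil _
  have ht' : ⌈(1 + τ) * (U : ℝ)⌉₊ ≤ (1 + τ) * (U + 1 : ℝ) := by
    have := Nat.ceil_lt_add_one (a := (1 + τ) * (U : ℝ)) (by positivity)
    linarith
  generalize ⌈(1 + τ) * (U : ℝ)⌉₊ = t at *
  obtain ⟨p, rfl⟩ : ∃ p, r = p + 2 := ⟨r - 2, by omega⟩
  have hM : (m : ℝ) ≤ μ * n ^ (p + 1) / U ^ p + 1 :=
    hm ▸ (Nat.ceil_lt_add_one (by positivity)).le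
  have hcount : (m : ℝ) * (t / n) ^ (p + 1) ≤ μ * (1 + τ) ^ (p + 1) * U +
      (μ * (1 + τ) ^ (p + 1) * (2 ^ (p + 1) - 1) + 1) :=
    mul_div_pow_succ_le hμ (by positivity) (Nat.one_le_cast.2 hU) (Nat.cast_pos.2 hn)
      (Nat.cast_nonneg t) (Nat.cast_le.2 htn) ht' hM
  have hexp := exp_mul_sub_one_nonneg hrk hlam
  simp only [phiE, roundingError, Nat.add_one_sub_one]
  set W := Real.exp (((k : ℝ) - (p + 2 : ℕ) + 1) * lam) - 1
  calc -lam * (t - U) + m * (W * (k.choose (p + 1) * (t / n : ℝ) ^ (p + 1)))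
    _ = -(lam * (t - U)) + W * k.choose (p + 1) * (m * (t / n : ℝ) ^ (p + 1)) := by ring
    _ ≤ -(lam * (τ * U)) + W * k.choose (p + 1) * (μ * (1 + τ) ^ (p + 1) * U +
        (μ * (1 + τ) ^ (p + 1) * (2 ^ (p + 1) - 1) + 1)) := by
      gcongr
      linarith
    _ = _ := by ring

lemma one_sub_exp_phiE_le_prG (hr : 2 ≤ r) (hrk : r ≤ k) (hkn : k ≤ n) (hU : 1 ≤ U)
    (hμ : 0 ≤ μ) (hlam : 0 ≤ lam) (hτ : 0 ≤ τ)
    (hm : m = ⌈μ * (n : ℝ) ^ (r - 1) / (U : ℝ) ^ (r - 2)⌉₊) :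
    1 - Real.exp (phiE k r μ lam τ * U + roundingError k r μ lam τ) ≤
      prG n m k (HasLargeStoppingSet (k - r + 2) U (n - (1 + τ) * U)) := by
  obtain hn | hn := lt_or_ge (n : ℝ) ((1 + τ) * U)
  · have : Nonempty (Fin k ↪ Fin n) := ⟨Fin.castLEEmb hkn⟩
    exact (sub_le_self _ (Real.exp_pos _).le).trans
      (one_le_prG (hasLargeStoppingSet_of_neg (sub_neg.2 hn)))
  have htn : ⌈(1 + τ) * (U : ℝ)⌉₊ ≤ n := Nat.ceil_le.2 hn
  have hsub : ((k - (r - 1) : ℕ) : ℝ) = (k : ℝ) - r + 1 := by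
    rw [Nat.cast_sub (by omega), Nat.cast_sub (by omega)]
    push_cast
    ring
  have hevent := one_sub_exp_le_prG_hasLargeStoppingSet (q := r - 1) (m := m) (U := U)
    (by omega) (by omega) hkn htn hlam
  rw [show k - (r - 1) + 1 = k - r + 2 by omega, hsub, mul_comm lam] at hevent
  have hexponent :=
    exponent_le_phiE_mul_add_roundingError hr hrk (by omega) hU hμ hlam hτ htn hm
  exact (sub_le_sub_left (Real.exp_le_exp.2 hexponent) 1).trans
    (hevent.trans (prG_mono fun ω => HasLargeStoppingSet.of_sub_ceil))

end Exponent

section Infimum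

lemma eventually_nhdsGT_neg_of_hasDerivAt {f : ℝ → ℝ} {f' a : ℝ} (hf : HasDerivAt f f' a)
    (ha : f a = 0) (hf' : f' < 0) : ∀ᶠ x in nhdsWithin a (Set.Ioi a), f x < 0 := by
  have hsign := eventually_nhdsWithin_sign_eq_of_deriv_neg (hf.deriv.trans_lt hf') ha
  filter_upwards [nhdsWithin_le_nhds hsign, self_mem_nhdsWithin] with x hx hax
  rwa [sign_neg (sub_neg.2 hax), sign_eq_neg_one_iff] at hx

-- At a fixed point `a` the hypothesis `(q - 1) * a < 1` says that `A * (1 + x) ^ q` has slope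
-- less than one, so the curve dips below the diagonal immediately to the right of `a`.
lemma exists_mul_one_add_pow_lt {A a b : ℝ} {q : ℕ} (hq : q ≠ 0) (ha : 0 ≤ a) (hab : a < b)
    (hfix : A * (1 + a) ^ q = a) (hslope : a * (q - 1) < 1) :
    ∃ x ∈ Set.Ioo a b, A * (1 + x) ^ q < x := by
  have hderiv : HasDerivAt (fun x => A * (1 + x) ^ q - x)
      (A * (q * (1 + a) ^ (q - 1) * 1) - 1) a :=
    ((((hasDerivAt_id a).const_add 1).pow q).const_mul A).sub (hasDerivAt_id a)
  have hneg : A * (q * (1 + a) ^ (q - 1) * 1) - 1 < 0 := by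
    rw [sub_neg, ← mul_lt_mul_iff_left₀ (by linarith : 0 < 1 + a)]
    calc A * (q * (1 + a) ^ (q - 1) * 1) * (1 + a)
      _ = q * (A * ((1 + a) ^ (q - 1) * (1 + a))) := by ring
      _ = q * a := by rw [← pow_succ, Nat.sub_add_cancel (Nat.one_le_iff_ne_zero.2 hq), hfix]
      _ < 1 * (1 + a) := by linarith
  obtain ⟨x, hx, hxab⟩ := ((eventually_nhdsGT_neg_of_hasDerivAt hderiv (sub_eq_zero.2 hfix)
    hneg).and (Ioo_mem_nhdsGT hab)).exists
  exact ⟨x, hxab, sub_neg.1 hx⟩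

lemma cast_choose_sub_one_mul {k r : ℕ} (hr : 1 ≤ r) (hrk : r ≤ k) :
    (k.choose (r - 1) : ℝ) * ((k : ℝ) - r + 1) = k.choose r * r := by
  obtain ⟨q, rfl⟩ := Nat.exists_eq_add_of_le' hr
  rw [show (k : ℝ) - (q + 1 : ℕ) + 1 = (k - q : ℕ) by
    rw [Nat.cast_sub (by omega)]; push_cast; ring]
  exact_mod_cast (Nat.choose_succ_right_eq k q).symm

variable {k r : ℕ} {μ lam τ T : ℝ}

lemma phiE_zero_left (k r : ℕ) (μ τ : ℝ) : phiE k r μ 0 τ = 0 := by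
  simp [phiE]

lemma phiE_zero_right_nonneg (hrk : r ≤ k) (hμ : 0 ≤ μ) (hlam : 0 ≤ lam) :
    0 ≤ phiE k r μ lam 0 := by
  have hexp := exp_mul_sub_one_nonneg hrk hlam
  rw [phiE, mul_zero, sub_zero]
  positivity

lemma continuous_phiE (k r : ℕ) (μ : ℝ) : Continuous fun p : ℝ × ℝ => phiE k r μ p.1 p.2 := by
  unfold phiE
  fun_prop

lemma hasDerivAt_phiE_zero (hr : 1 ≤ r) (hrk : r ≤ k) (μ τ : ℝ) :
    HasDerivAt (fun lam => phiE k r μ lam τ)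
      (μ * (k.choose r * r) * (1 + τ) ^ (r - 1) - τ) 0 := by
  have hexp := ((((hasDerivAt_id (0 : ℝ)).const_mul ((k : ℝ) - r + 1)).exp).sub_const 1).const_mul μ
  refine HasDerivAt.congr_deriv (f := fun lam => phiE k r μ lam τ)
    (((hexp.mul_const (k.choose (r - 1) : ℝ)).mul_const ((1 + τ) ^ (r - 1))).sub
      ((hasDerivAt_id (0 : ℝ)).mul_const τ)) ?_
  simp only [id, mul_zero, Real.exp_zero, mul_one, one_mul, ← cast_choose_sub_one_mul hr hrk]
  ring

lemma phiE_nonneg_of_two_mul_div_le (hrk : r ≤ k) (hμ : 0 < μ) (hτ : 0 ≤ τ)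
    (hlam : 2 * τ / μ ≤ lam) : 0 ≤ phiE k r μ lam τ := by
  have hrk' : (r : ℝ) ≤ k := mod_cast hrk
  have hlam0 : 0 ≤ lam := (by positivity : 0 ≤ 2 * τ / μ).trans hlam
  have hexp : lam ^ 2 / 2 ≤ Real.exp (((k : ℝ) - r + 1) * lam) - 1 := by
    have hmono : Real.exp lam ≤ Real.exp (((k : ℝ) - r + 1) * lam) :=
      Real.exp_le_exp.2 (le_mul_of_one_le_left hlam0 (by linarith))
    linarith [Real.quadratic_le_exp_of_nonneg hlam0]
  have hchoose : (1 : ℝ) ≤ k.choose (r - 1) :=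
    mod_cast Nat.choose_pos ((Nat.sub_le r 1).trans hrk)
  have hpow : 1 ≤ (1 + τ) ^ (r - 1) := one_le_pow₀ (by linarith)
  refine sub_nonneg.2 ?_
  calc lam * τ ≤ lam * (lam * μ / 2) := by
        have := (div_le_iff₀ hμ).1 hlam
        gcongr
        linarith
    _ = μ * (lam ^ 2 / 2) * 1 * 1 := by ring
    _ ≤ μ * (Real.exp (((k : ℝ) - r + 1) * lam) - 1) * k.choose (r - 1) * (1 + τ) ^ (r - 1) := by
        have := exp_mul_sub_one_nonneg hrk hlam0
        gcongr

lemma exists_phiE_neg {τstar : ℝ} (hr : 2 ≤ r) (hrk : r ≤ k) (hτs0 : 0 < τstar)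
    (hτs1 : τstar * ((r : ℝ) - 2) < 1)
    (hτseq : μ = ((k.choose r : ℝ))⁻¹ * (τstar / ((r : ℝ) * (1 + τstar) ^ (r - 1))))
    (hT : τstar < T) : ∃ lam > 0, ∃ τ ∈ Set.Ioo 0 T, phiE k r μ lam τ < 0 := by
  have hfix : μ * (k.choose r * r) * (1 + τstar) ^ (r - 1) = τstar := by
    have : (0 : ℝ) < k.choose r := mod_cast Nat.choose_pos hrk
    rw [hτseq]
    field_simp
  obtain ⟨τ, ⟨hτ0, hτT⟩, hτ⟩ := exists_mul_one_add_pow_lt (by omega) hτs0.le hT hfix (by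
    rw [Nat.cast_sub (by omega), Nat.cast_one]
    linarith)
  obtain ⟨lam, hneg, hlam⟩ := ((eventually_nhdsGT_neg_of_hasDerivAt
    (hasDerivAt_phiE_zero (one_le_two.trans hr) hrk μ τ) (phiE_zero_left k r μ τ)
    (sub_neg.2 hτ)).and self_mem_nhdsWithin).exists
  exact ⟨lam, hlam, τ, ⟨hτs0.trans hτ0, hτT⟩, hneg⟩

-- `phiE` is nonnegative where `lam` is large and on the edges `lam = 0` and `τ = 0`, so a negative
-- value forces its minimum over a compact rectangle to lie in the region the infimum ranges over,
-- except that `τ = T` is possible.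
lemma exists_phiE_neg_le_sInf (hrk : r ≤ k) (hμ : 0 < μ)
    (hneg : ∃ lam > 0, ∃ τ ∈ Set.Ioo 0 T, phiE k r μ lam τ < 0) :
    ∃ lam > 0, ∃ τ ∈ Set.Ioc 0 T, phiE k r μ lam τ < 0 ∧
      phiE k r μ lam τ ≤
        sInf {v : ℝ | ∃ lam > (0 : ℝ), ∃ τ ∈ Set.Ioo (0 : ℝ) T, v = phiE k r μ lam τ} := by
  obtain ⟨lam₁, hlam₁, τ₁, hτ₁, hneg₁⟩ := hneg
  have hlarge : ∀ lam, ∀ τ ∈ Set.Ioo 0 T, phiE k r μ lam τ < 0 → lam ≤ 2 * T / μ := by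
    intro lam τ hτ hlt
    refine (lt_of_not_ge fun hle => hlt.not_ge
      (phiE_nonneg_of_two_mul_div_le hrk hμ hτ.1.le hle)).le.trans ?_
    gcongr
    exact hτ.2.le
  have hmem : ∀ lam > 0, ∀ τ ∈ Set.Ioo 0 T, phiE k r μ lam τ < 0 →
      (lam, τ) ∈ Set.Icc 0 (2 * T / μ) ×ˢ Set.Icc 0 T := fun lam hlam τ hτ hlt =>
    ⟨⟨hlam.le, hlarge lam τ hτ hlt⟩, Set.Ioo_subset_Icc_self hτ⟩
  obtain ⟨⟨lam₀, τ₀⟩, ⟨⟨hlam₀, -⟩, hτ₀, hτ₀T⟩, hmin⟩ :=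
    (isCompact_Icc.prod isCompact_Icc).exists_isMinOn ⟨_, hmem lam₁ hlam₁ τ₁ hτ₁ hneg₁⟩
      (continuous_phiE k r μ).continuousOn
  have hneg₀ : phiE k r μ lam₀ τ₀ < 0 :=
    (hmin (hmem lam₁ hlam₁ τ₁ hτ₁ hneg₁)).trans_lt hneg₁
  have hlam₀' : lam₀ ≠ 0 := by
    rintro rfl
    exact hneg₀.ne (phiE_zero_left k r μ τ₀)
  have hτ₀' : τ₀ ≠ 0 := by
    rintro rfl
    exact hneg₀.not_ge (phiE_zero_right_nonneg hrk hμ.le hlam₀)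
  refine ⟨lam₀, hlam₀.lt_of_ne' hlam₀', τ₀, ⟨hτ₀.lt_of_ne' hτ₀', hτ₀T⟩, hneg₀,
    le_csInf ⟨_, lam₁, hlam₁, τ₁, hτ₁, rfl⟩ ?_⟩
  rintro v ⟨lam, hlam, τ, hτ, rfl⟩
  obtain hlt | hge := lt_or_ge (phiE k r μ lam τ) 0
  · exact hmin (hmem lam hlam τ hτ hlt)
  · exact hneg₀.le.trans hge

end Infimum

theorem stmt11_general (k r : ℕ) (hr : 2 ≤ r) (hrk : r ≤ k)
    (u : ℕ → ℕ) (hu : Tendsto (fun n => (u n : ℝ)) atTop atTop)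
    (μ : ℝ) (hμ0 : 0 < μ)
    (τstar : ℝ) (hτs0 : 0 < τstar) (hτs1 : τstar * ((r : ℝ) - 2) < 1)
    (hτseq : μ = ((k.choose r : ℝ))⁻¹ * (τstar / ((r : ℝ) * (1 + τstar) ^ (r - 1))))
    (τ : ℝ) (hτ : τstar < τ)
    (m : ℕ → ℕ) (hm : ∀ n, m n = ⌈μ * (n : ℝ) ^ (r - 1) / (u n : ℝ) ^ (r - 2)⌉₊) :
    (∃ C : ℝ, 0 ≤ C ∧ ∀ᶠ n in atTop,
      1 - Real.exp
            ((sInf {v : ℝ | ∃ lam > (0 : ℝ), ∃ τ' ∈ Set.Ioo (0 : ℝ) τ,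
                v = phiE k r μ lam τ'}) * u n + C) ≤
        prG n (m n) k (HasLargeStoppingSet (k - r + 2) (u n) (n - (1 + τ) * u n))) ∧
    (∃ c > (0 : ℝ), ∀ᶠ n in atTop,
      1 - Real.exp (-c * u n) ≤
        prG n (m n) k (HasLargeStoppingSet (k - r + 2) (u n) (n - (1 + τ) * u n))) := by
  obtain ⟨lam, hlam, τ', ⟨hτ'0, hτ'τ⟩, hneg, hinf⟩ :=
    exists_phiE_neg_le_sInf hrk hμ0 (exists_phiE_neg hr hrk hτs0 hτs1 hτseq hτ)
  set C := roundingError k r μ lam τ'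
  have hbound : ∀ᶠ n in atTop, 1 - Real.exp (phiE k r μ lam τ' * u n + C) ≤
      prG n (m n) k (HasLargeStoppingSet (k - r + 2) (u n) (n - (1 + τ) * u n)) := by
    filter_upwards [hu.eventually_ge_atTop 1, eventually_ge_atTop k] with n hun hkn
    exact (one_sub_exp_phiE_le_prG hr hrk hkn (Nat.one_le_cast.1 hun) hμ0.le hlam.le hτ'0.le
      (hm n)).trans (prG_mono fun ω h => h.mono (by gcongr))
  refine ⟨⟨C, roundingError_nonneg hrk hμ0.le hlam.le hτ'0.le, hbound.mono fun n hn =>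
    le_trans (by gcongr) hn⟩, -phiE k r μ lam τ' / 2, by linarith, ?_⟩
  filter_upwards [hbound, hu.eventually_ge_atTop (C / (-phiE k r μ lam τ' / 2))] with n hn hun
  rw [div_le_iff₀ (by linarith)] at hun
  exact (sub_le_sub_left (Real.exp_le_exp.2 (by linarith)) 1).trans hn

/-- Theorem `thm:ML`: for `m = ⌈μ n^{r-1}/u(n)^{r-2}⌉` with
`0 < μ < μ_c(k,r)`, `τ*` the unique solution in `(0,1/(r-2))` of
`μ = binom(k,r)⁻¹ τ*/(r(1+τ*)^{r-1})`, and any `τ > τ*`, the probability that there is a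
`(k-r+2)`-stopping set of size larger than `n - (1+τ)u(n)` inside `{u(n)+1,…,n}` is at
least `1 - exp((inf_{λ>0, τ'∈(0,τ)} φ_{k,r}(μ,λ,τ')) u(n) + C max{1, u(n)²/n})`; in
particular it tends to `1` exponentially fast in `u(n)`. -/
theorem stmt11 (k r : ℕ) (hr : 3 ≤ r) (hrk : r ≤ k)
    (u : ℕ → ℕ) (hu : UGood u)
    (μ : ℝ) (hμ0 : 0 < μ) (hμ : μ < muc k r)
    (τstar : ℝ) (hτs0 : 0 < τstar) (hτs1 : τstar < 1 / ((r : ℝ) - 2))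
    (hτseq : μ = ((k.choose r : ℝ))⁻¹ * (τstar / ((r : ℝ) * (1 + τstar) ^ (r - 1))))
    (τ : ℝ) (hτ : τstar < τ)
    (m : ℕ → ℕ) (hm : ∀ n, m n = ⌈μ * (n : ℝ) ^ (r - 1) / (u n : ℝ) ^ (r - 2)⌉₊) :
    (∃ C : ℝ, ∀ᶠ n in atTop,
      1 - Real.exp
            ((sInf {v : ℝ | ∃ lam > (0 : ℝ), ∃ τ' ∈ Set.Ioo (0 : ℝ) τ,
                v = phiE k r μ lam τ'}) * u n
              + C * max 1 ((u n : ℝ) ^ 2 / n)) ≤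
        prG n (m n) k (fun ω : Fin (m n) → (Fin k ↪ Fin n) =>
          ∃ V : Finset (Fin n), (∀ i ∈ V, u n ≤ (i : ℕ)) ∧
            (n : ℝ) - (1 + τ) * u n < (V.card : ℝ) ∧ IsStoppingSet (k - r + 2) ω V)) ∧
    (∃ c > (0 : ℝ), ∀ᶠ n in atTop,
      1 - Real.exp (-c * u n) ≤
        prG n (m n) k (fun ω : Fin (m n) → (Fin k ↪ Fin n) =>
          ∃ V : Finset (Fin n), (∀ i ∈ V, u n ≤ (i : ℕ)) ∧
            (n : ℝ) - (1 + τ) * u n < (V.card : ℝ) ∧ IsStoppingSet (k - r + 2) ω V)) := by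
  obtain ⟨⟨C, hC, hbound⟩, hexp⟩ := stmt11_general k r (by omega) hrk u hu.1 μ hμ0 τstar hτs0
    ((lt_div_iff₀ (sub_pos.2 (Nat.ofNat_lt_cast.2 hr))).1 hτs1) hτseq τ hτ m hm
  exact ⟨⟨C, hbound.mono fun n hn => le_trans
    (by gcongr; exact le_mul_of_one_le_right hC (le_max_left _ _)) hn⟩, hexp⟩
end
end

section
/- Fix integers k ≥ r ≥ 3, a real α ∈ (0,1), u ∈ ω(1) ∩ o(n), and a constant μ > μ_c(k,r). Then, for the random bipartite graph ensemble with n variables and m = ⌈μ·n^{r−1}/u(n)^{r−2}⌉ constraints, there is a constant C such that for all sufficiently large n, the probability that there is NO (k−r+2)-stopping set of size at least αn contained in {u(n)+1,…,n} is at least 1 − exp( (sup_{τ>0} inf_{λ<0} φ_{k,r}(μ,λ,τ))·u(n) + C·max{u(n)²/n, log u(n)} ); in particular this probability tends to 1 exponentially fast in u(n). -/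
open Filter Finset Asymptotics

noncomputable section

/-!
The complement of a `(k - r + 2)`-stopping set is closed under percolation with threshold `r - 1`:
a constraint with at least `r - 1` neighbors in it has all its neighbors in it. So a stopping set
of size at least `α n` that avoids the first `u` variables forces percolation from these `u`
variables to reach exactly `t` variables for some `t ≤ (1 - α) n`. To bound the probability of this
for a fixed `t`, explore the percolation by testing one constraint on one more reached variable at
a time. As long as a constraint has fewer than `r - 1` reached neighbors, all unreached variables
are exchangeable for it, so when it reaches its threshold each of its `k - r + 1` remaining
neighbors is an unreached variable with probability at least `1 - t / n`. Weighting an outcome by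
`exp (λ * t)` with `λ ≤ 0` gives a Chernoff bound.

Its exponent is `u φ(λ, τ)` up to an error `O(1 + u² / n)` when `t + 1 = (1 + τ) u ≤ K u + 1`, and
choosing `λ` by `τ` bounds this by the supremum over `τ` of the infimum over `λ`. When `t > K u`,
the choice `λ = -1` makes the exponent smaller by `t`, because the expected number of constraints
that have `r - 1` neighbors among `t` variables grows like `t (t / u) ^ (r - 2)`; these terms are
summable. The supremum is negative for `μ > μ_c`, since `μ_c` is the value above which
`μ (k - r + 1) binom(k, r - 1) (1 + τ) ^ (r - 1) > τ` for every `τ > 0`, by Bernoulli's inequality.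
-/

section Percolation

variable {V ι : Type*} [Fintype V] [DecidableEq V]

/-- Closed sets of the threshold-`p` percolation along the hyperedges `S a`: an edge with at least
`p` vertices in `W` lies in `W`. The complements of stopping sets are of this kind. -/
def IsPercolationClosed (p : ℕ) (S : ι → Finset V) (W : Finset V) : Prop :=
  ∀ a, p ≤ #(S a ∩ W) → S a ⊆ W

open Classical in
/-- The set of vertices reached from `L` by threshold-`p` percolation along the hyperedges `S a`,
encoded as the intersection of the closed sets containing `L`. -/
def percolationClosure (p : ℕ) (S : ι → Finset V) (L : Finset V) : Finset V :=
  {i | ∀ W, L ⊆ W → IsPercolationClosed p S W → i ∈ W}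

variable {p : ℕ} {S : ι → Finset V} {L W : Finset V}

lemma mem_percolationClosure {i : V} :
    i ∈ percolationClosure p S L ↔ ∀ W, L ⊆ W → IsPercolationClosed p S W → i ∈ W := by
  simp only [percolationClosure, mem_filter, mem_univ, true_and]

lemma subset_percolationClosure : L ⊆ percolationClosure p S L := fun _ hi =>
  mem_percolationClosure.mpr fun _ hLW _ => hLW hi

lemma percolationClosure_subset (hLW : L ⊆ W) (hW : IsPercolationClosed p S W) :
    percolationClosure p S L ⊆ W := fun _ hi =>
  mem_percolationClosure.mp hi W hLW hW

lemma IsPercolationClosed.percolationClosure_eq (hL : IsPercolationClosed p S L) :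
    percolationClosure p S L = L :=
  (percolationClosure_subset subset_rfl hL).antisymm subset_percolationClosure

lemma percolationClosure_union {a : ι} (ha : p ≤ #(S a ∩ L)) :
    percolationClosure p S (L ∪ S a) = percolationClosure p S L := by
  ext i
  simp only [mem_percolationClosure, union_subset_iff]
  refine forall_congr' fun W => ⟨fun h hLW hW => h ⟨hLW, hW a ?_⟩ hW, fun h hLW => h hLW.1⟩
  exact ha.trans (card_le_card (inter_subset_inter_left hLW))

end Percolation

section Dormant

variable {V X : Type*} [DecidableEq V] [Fintype X]

/-- The values `x` of a constraint that do not propagate from `P`: those whose neighborhood `N x`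
has fewer than `p` elements in `P`. -/
def dormant (N : X → Finset V) (p : ℕ) (P : Finset V) : Finset X :=
  {x | #(N x ∩ P) < p}

/-- The values of a constraint that propagate from `insert v P` but not yet from `P`. -/
def awakened [DecidableEq X] (N : X → Finset V) (p : ℕ) (P : Finset V) (v : V) : Finset X :=
  dormant N p P \ dormant N p (insert v P)

variable {N : X → Finset V} {p : ℕ} {P : Finset V} {v : V}

lemma mem_dormant {x : X} : x ∈ dormant N p P ↔ #(N x ∩ P) < p := by
  simp only [dormant, mem_filter, mem_univ, true_and]

lemma dormant_insert_subset : dormant N p (insert v P) ⊆ dormant N p P := fun _ hx =>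
  mem_dormant.mpr <| (card_le_card (inter_subset_inter_left (subset_insert v P))).trans_lt
    (mem_dormant.mp hx)

variable [DecidableEq X]

lemma card_awakened_add_card_dormant :
    #(awakened N p P v) + #(dormant N p (insert v P)) = #(dormant N p P) :=
  card_sdiff_add_card_eq_card dormant_insert_subset

lemma card_inter_insert_of_mem_awakened {x : X} (hx : x ∈ awakened N p P v) :
    #(N x ∩ insert v P) = p := by
  simp only [awakened, Finset.mem_sdiff, mem_dormant, not_lt] at hx
  have hle : #(N x ∩ insert v P) ≤ #(N x ∩ P) + 1 := by
    rw [insert_eq, inter_union_distrib_left, union_comm]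
    refine (card_union_le _ _).trans (Nat.add_le_add_left ?_ _)
    exact (card_le_card inter_subset_right).trans (card_singleton v).le
  omega

end Dormant

section Exploration

/-- What an exploration has learnt about the value of one constraint: only that it is dormant on
the set `P`, or its value `x`. -/
inductive Knowledge (V X : Type*) where
  | dormantOn (P : Finset V)
  | revealed (x : X)

namespace Knowledge

variable {V X : Type*}

/-- The knowledge only concerns vertices of `L`. -/
def IsWithin (N : X → Finset V) (L : Finset V) : Knowledge V X → Prop
  | dormantOn P => P ⊆ L
  | revealed x => N x ⊆ L

/-- The knowledge does not leave any vertex of `L` untested. -/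
def IsSaturated (L : Finset V) (s : Knowledge V X) : Prop :=
  ∀ P, s = dormantOn P → L ⊆ P

lemma IsWithin.mono {N : X → Finset V} {L L' : Finset V} (h : L ⊆ L') :
    ∀ {s : Knowledge V X}, s.IsWithin N L → s.IsWithin N L'
  | dormantOn _, hs => hs.trans h
  | revealed _, hs => hs.trans h

variable [DecidableEq V]

/-- The number of vertices on which a constraint may still be tested, plus one; it decreases as
the exploration proceeds. -/
def remaining [Fintype V] : Knowledge V X → ℕ
  | dormantOn P => #Pᶜ + 1
  | revealed _ => 0

variable [Fintype X]

/-- The values of a constraint that agree with the knowledge. -/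
def values (N : X → Finset V) (p : ℕ) : Knowledge V X → Finset X
  | dormantOn P => dormant N p P
  | revealed x => {x}

/-- The factor of a constraint in the bound `card_outcomes_mul_pow_le`. Each awakened value is
discounted by `ρ`, and `A` bounds the number of values that stay dormant until the end. -/
def weight (N : X → Finset V) (p : ℕ) (A ρ : ℝ) : Knowledge V X → ℝ
  | dormantOn P => A * (1 - ρ) + #(dormant N p P) * ρ
  | revealed _ => 1

variable {N : X → Finset V} {p : ℕ} {A ρ : ℝ} {L : Finset V}

lemma weight_nonneg (hA : 0 ≤ A) (hρ₀ : 0 ≤ ρ) (hρ₁ : ρ ≤ 1) :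
    ∀ s : Knowledge V X, 0 ≤ s.weight N p A ρ
  | dormantOn _ => add_nonneg (mul_nonneg hA (sub_nonneg.mpr hρ₁)) (by positivity)
  | revealed _ => zero_le_one

lemma subset_of_mem_values : ∀ {s : Knowledge V X} {x : X}, s.IsWithin N L → s.IsSaturated L →
    x ∈ s.values N p → p ≤ #(N x ∩ L) → N x ⊆ L
  | dormantOn P, _, _, hsat, hx, hp =>
    absurd (mem_dormant.mp hx) <|
      (hp.trans (card_le_card (inter_subset_inter_left (hsat P rfl)))).not_gt
  | revealed _, _, hin, _, hx, _ => mem_singleton.mp hx ▸ hin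

lemma card_values_le_weight (hρ₁ : ρ ≤ 1) (hA : #(dormant N p L) ≤ A) :
    ∀ {s : Knowledge V X}, s.IsWithin N L → s.IsSaturated L →
      #(s.values N p) ≤ s.weight N p A ρ
  | dormantOn P, hin, hsat => by
    obtain rfl : P = L := subset_antisymm hin (hsat P rfl)
    simp only [values, weight]
    nlinarith
  | revealed x, _, _ => by simp only [values, weight, card_singleton, Nat.cast_one, le_refl]

variable [DecidableEq X]

lemma weight_dormantOn_eq_add (P : Finset V) (v : V) :
    (dormantOn P : Knowledge V X).weight N p A ρ =
      (dormantOn (insert v P) : Knowledge V X).weight N p A ρ + #(awakened N p P v) * ρ := by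
  simp only [weight, ← card_awakened_add_card_dormant (N := N) (p := p) (P := P) (v := v)]
  push_cast
  ring

end Knowledge

open Knowledge

section Update

variable {ι β M : Type*} [DecidableEq ι]

lemma forall_update_of_imp {R R' : β → Prop} {s : ι → β} {a : ι} {y : β} (hs : ∀ b, R (s b))
    (hR : ∀ b, R b → R' b) (hy : R' y) (b : ι) : R' (Function.update s a y b) := by
  rw [Function.update_apply]
  split_ifs
  exacts [hy, hR _ (hs b)]

variable [Fintype ι] [CommMonoid M]

@[to_additive]
lemma prod_comp_update (f : β → M) (s : ι → β) (a : ι) (y : β) :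
    ∏ b, f (Function.update s a y b) = f y * ∏ b ∈ univ.erase a, f (s b) := by
  rw [← mul_prod_erase _ _ (mem_univ a), Function.update_self]
  refine congrArg _ (prod_congr rfl fun b hb => ?_)
  rw [Function.update_of_ne (ne_of_mem_erase hb)]

end Update

variable {V X ι : Type*} [Fintype V] [DecidableEq V] [Fintype X] {N : X → Finset V} {p t : ℕ}
  {s : ι → Knowledge V X} {L : Finset V}

lemma percolationClosure_eq_of_isSaturated (hin : ∀ a, (s a).IsWithin N L)
    (hsat : ∀ a, (s a).IsSaturated L) {ω : ι → X} (hω : ∀ a, ω a ∈ (s a).values N p) :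
    percolationClosure p (fun a => N (ω a)) L = L :=
  IsPercolationClosed.percolationClosure_eq fun a => subset_of_mem_values (hin a) (hsat a) (hω a)

variable [Fintype ι] [DecidableEq ι]

/-- The outcomes `ω` compatible with the knowledge `s` for which percolation from `L` stops with
exactly `t` vertices. -/
def outcomes (N : X → Finset V) (p t : ℕ) (s : ι → Knowledge V X) (L : Finset V) :
    Finset (ι → X) :=
  {ω ∈ Fintype.piFinset fun a => (s a).values N p |
    #(percolationClosure p (fun a => N (ω a)) L) = t}

lemma mem_outcomes {ω : ι → X} : ω ∈ outcomes N p t s L ↔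
    (∀ a, ω a ∈ (s a).values N p) ∧ #(percolationClosure p (fun a => N (ω a)) L) = t := by
  simp only [outcomes, mem_filter, Fintype.mem_piFinset]

lemma outcomes_eq_empty_of_lt_card (h : t < #L) : outcomes N p t s L = ∅ := by
  refine eq_empty_of_forall_notMem fun ω hω => h.not_ge ?_
  exact (mem_outcomes.mp hω).2 ▸ card_le_card subset_percolationClosure

lemma mem_outcomes_update {ω : ι → X} {a : ι} {y : Knowledge V X} {L' : Finset V}
    (hω : ω ∈ outcomes N p t s L) (hy : ω a ∈ y.values N p)
    (hL' : percolationClosure p (fun a => N (ω a)) L' =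
      percolationClosure p (fun a => N (ω a)) L) :
    ω ∈ outcomes N p t (Function.update s a y) L' := by
  refine mem_outcomes.mpr ⟨fun b => ?_, hL' ▸ (mem_outcomes.mp hω).2⟩
  obtain rfl | hb := eq_or_ne b a
  · rwa [Function.update_self]
  · rw [Function.update_of_ne hb]
    exact (mem_outcomes.mp hω).1 b

variable {A ρ z : ℝ}

lemma card_outcomes_mul_pow_le_of_isSaturated (hz : 0 ≤ z) (hA₀ : 0 ≤ A) (hρ₀ : 0 ≤ ρ)
    (hρ₁ : ρ ≤ 1) (hA : ∀ L, #L = t → #(dormant N p L) ≤ A) (hin : ∀ a, (s a).IsWithin N L)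
    (hsat : ∀ a, (s a).IsSaturated L) :
    #(outcomes N p t s L) * z ^ t ≤ z ^ #L * ∏ a, (s a).weight N p A ρ := by
  obtain ht | ht := eq_or_ne (#L) t
  · rw [ht, mul_comm]
    refine mul_le_mul_of_nonneg_left ?_ (pow_nonneg hz t)
    calc (#(outcomes N p t s L) : ℝ) ≤ ∏ a, (#((s a).values N p) : ℝ) := by
          rw [← Nat.cast_prod, ← Fintype.card_piFinset]
          exact_mod_cast card_filter_le _ _
      _ ≤ _ := prod_le_prod (fun _ _ => Nat.cast_nonneg _) fun a _ =>
          card_values_le_weight hρ₁ (hA L ht) (hin a) (hsat a)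
  · have hempty : outcomes N p t s L = ∅ := eq_empty_of_forall_notMem fun ω hω => ht <| by
      obtain ⟨hval, hcard⟩ := mem_outcomes.mp hω
      rwa [percolationClosure_eq_of_isSaturated hin hsat hval] at hcard
    rw [hempty, card_empty, Nat.cast_zero, zero_mul]
    exact mul_nonneg (pow_nonneg hz _) (prod_nonneg fun a _ => weight_nonneg hA₀ hρ₀ hρ₁ _)

variable [DecidableEq X]

lemma outcomes_subset_of_dormantOn {a : ι} {P : Finset V} {v : V} (ha : s a = dormantOn P)
    (hPL : P ⊆ L) (hv : v ∈ L) :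
    outcomes N p t s L ⊆ outcomes N p t (Function.update s a (dormantOn (insert v P))) L ∪
      (awakened N p P v).biUnion fun x =>
        outcomes N p t (Function.update s a (revealed x)) (L ∪ N x) := by
  intro ω hω
  have hωa : ω a ∈ dormant N p P := by
    have := (mem_outcomes.mp hω).1 a
    rwa [ha] at this
  by_cases hdorm : ω a ∈ dormant N p (insert v P)
  · exact mem_union_left _ (mem_outcomes_update hω hdorm rfl)
  have hawake : ω a ∈ awakened N p P v := Finset.mem_sdiff.mpr ⟨hωa, hdorm⟩
  have hp : p ≤ #(N (ω a) ∩ L) := (card_inter_insert_of_mem_awakened hawake).ge.trans <|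
    card_le_card <| inter_subset_inter_left <| insert_subset hv hPL
  refine mem_union_right _ (mem_biUnion.mpr ⟨ω a, hawake, ?_⟩)
  exact mem_outcomes_update hω (mem_singleton_self _)
    (percolationClosure_union (S := fun a => N (ω a)) hp)

lemma card_outcomes_mul_pow_le_of_dormantOn {a : ι} {P : Finset V} {v : V} {R : ℝ}
    (hz : 0 ≤ z) (ha : s a = dormantOn P) (hPL : P ⊆ L) (hv : v ∈ L) (hR : 0 ≤ R)
    (hT : ∑ x ∈ awakened N p P v, z ^ #(L ∪ N x) ≤ z ^ #L * (#(awakened N p P v) * ρ))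
    (hdorm : #(outcomes N p t (Function.update s a (dormantOn (insert v P))) L) * z ^ t ≤
      z ^ #L * ((dormantOn (insert v P) : Knowledge V X).weight N p A ρ * R))
    (hrev : ∀ x, #(outcomes N p t (Function.update s a (revealed x)) (L ∪ N x)) * z ^ t ≤
      z ^ #(L ∪ N x) * ((revealed x : Knowledge V X).weight N p A ρ * R)) :
    #(outcomes N p t s L) * z ^ t ≤ z ^ #L * ((s a).weight N p A ρ * R) := by
  have hcard : (#(outcomes N p t s L) : ℝ) ≤
      #(outcomes N p t (Function.update s a (dormantOn (insert v P))) L) +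
        ∑ x ∈ awakened N p P v,
          (#(outcomes N p t (Function.update s a (revealed x)) (L ∪ N x)) : ℝ) := by
    exact_mod_cast (card_le_card (outcomes_subset_of_dormantOn ha hPL hv)).trans <|
      (card_union_le _ _).trans (Nat.add_le_add_left card_biUnion_le _)
  have hsum : (∑ x ∈ awakened N p P v,
      (#(outcomes N p t (Function.update s a (revealed x)) (L ∪ N x)) : ℝ)) * z ^ t ≤
        z ^ #L * (#(awakened N p P v) * ρ) * R := by
    refine le_trans ?_ (mul_le_mul_of_nonneg_right hT hR)
    rw [sum_mul, sum_mul]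
    exact sum_le_sum fun x _ => (hrev x).trans_eq (by rw [weight, one_mul])
  calc (#(outcomes N p t s L) : ℝ) * z ^ t
      ≤ z ^ #L * ((dormantOn (insert v P) : Knowledge V X).weight N p A ρ * R) +
          z ^ #L * (#(awakened N p P v) * ρ) * R := by
        refine (mul_le_mul_of_nonneg_right hcard (pow_nonneg hz t)).trans ?_
        rw [add_mul]
        exact add_le_add hdorm hsum
    _ = z ^ #L * ((s a).weight N p A ρ * R) := by
        rw [ha, weight_dormantOn_eq_add P v]
        ring

/-- The exploration tests a dormant constraint on one more vertex of `L` and, when it awakes,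
reveals its value and adds its neighborhood to `L`; `z ^ #L` times the product of the weights is a
supermartingale along these steps. -/
theorem card_outcomes_mul_pow_le (hz : 0 ≤ z) (hA₀ : 0 ≤ A) (hρ₀ : 0 ≤ ρ) (hρ₁ : ρ ≤ 1)
    (hA : ∀ L, #L = t → #(dormant N p L) ≤ A)
    (hT : ∀ P L v, P ⊆ L → v ∈ L → v ∉ P → #L ≤ t →
      ∑ x ∈ awakened N p P v, z ^ #(L ∪ N x) ≤ z ^ #L * (#(awakened N p P v) * ρ))
    (s : ι → Knowledge V X) (L : Finset V) (hin : ∀ a, (s a).IsWithin N L) :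
    #(outcomes N p t s L) * z ^ t ≤ z ^ #L * ∏ a, (s a).weight N p A ρ := by
  induction hn : ∑ a, (s a).remaining using Nat.strong_induction_on generalizing s L with
  | _ n ih =>
  obtain ht | ht := lt_or_ge t #L
  · rw [outcomes_eq_empty_of_lt_card ht, card_empty, Nat.cast_zero, zero_mul]
    exact mul_nonneg (pow_nonneg hz _) (prod_nonneg fun a _ => weight_nonneg hA₀ hρ₀ hρ₁ _)
  by_cases hsat : ∀ a, (s a).IsSaturated L
  · exact card_outcomes_mul_pow_le_of_isSaturated hz hA₀ hρ₀ hρ₁ hA hin hsat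
  obtain ⟨a, P, ha, v, hvL, hvP⟩ : ∃ a P, s a = dormantOn P ∧ ∃ v ∈ L, v ∉ P := by
    simpa only [IsSaturated, not_forall, exists_prop, not_subset] using hsat
  have hPL : P ⊆ L := by simpa only [ha, IsWithin] using hin a
  have hstep : ∀ y : Knowledge V X, y.remaining < (s a).remaining →
      ∀ L', L ⊆ L' → y.IsWithin N L' →
        #(outcomes N p t (Function.update s a y) L') * z ^ t ≤
          z ^ #L' * (y.weight N p A ρ * ∏ b ∈ univ.erase a, (s b).weight N p A ρ) := by
    intro y hy L' hL' hin'
    rw [← prod_comp_update]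
    refine ih _ ?_ _ L' (forall_update_of_imp hin (fun _ => IsWithin.mono hL') hin') rfl
    rw [← hn, sum_comp_update, ← add_sum_erase _ _ (mem_univ a)]
    exact Nat.add_lt_add_right hy _
  rw [← mul_prod_erase _ _ (mem_univ a)]
  refine card_outcomes_mul_pow_le_of_dormantOn hz ha hPL hvL
    (prod_nonneg fun b _ => weight_nonneg hA₀ hρ₀ hρ₁ _) (hT P L v hPL hvL hvP ht)
    (hstep _ ?_ L subset_rfl (insert_subset hvL hPL)) fun x =>
    hstep _ ?_ (L ∪ N x) subset_union_left subset_union_right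
  · rw [ha, remaining, remaining, Nat.add_lt_add_iff_right]
    exact card_lt_card (compl_ssubset_compl.mpr (ssubset_insert hvP))
  · rw [ha, remaining, remaining]
    exact Nat.succ_pos _

end Exploration

section Averaging

variable {V Y : Type*} [DecidableEq V] {D : Finset Y} {N : Y → Finset V} {L Q : Finset V} {e : ℕ}

lemma sum_card_inter_eq_sum_card_filter_mem (D : Finset Y) (N : Y → Finset V) (W : Finset V) :
    ∑ y ∈ D, #(N y ∩ W) = ∑ w ∈ W, #{y ∈ D | w ∈ N y} := by
  refine Eq.trans (sum_congr rfl fun y _ => ?_)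
    (sum_card_bipartiteAbove_eq_sum_card_bipartiteBelow fun y w => w ∈ N y)
  rw [inter_comm, ← filter_mem_eq_inter, bipartiteAbove]

lemma add_mul_pow_le {z : ℝ} (hz : 0 ≤ z) (a b : ℕ) :
    (a + b) * z ^ a ≤ a * z ^ (a + b) + b := by
  obtain h | h := Nat.eq_zero_or_pos (a + b)
  · simp only [Nat.add_eq_zero_iff.mp h, Nat.cast_zero, add_zero, zero_mul, le_refl]
  have hab : (0 : ℝ) < a + b := by exact_mod_cast h
  have hamgm := Real.geom_mean_le_arith_mean2_weighted (w₁ := a / (a + b)) (w₂ := b / (a + b))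
    (by positivity) (by positivity) (pow_nonneg hz (a + b)) zero_le_one
    (by rw [← add_div, div_self hab.ne'])
  rw [Real.one_rpow, mul_one, ← Real.rpow_natCast, ← Real.rpow_mul hz, Nat.cast_add,
    mul_div_cancel₀ _ hab.ne', Real.rpow_natCast] at hamgm
  calc (a + b) * z ^ a ≤ (a + b) * (a / (a + b) * z ^ ((a : ℝ) + b) + b / (a + b) * 1) := by
        gcongr
    _ = a * z ^ (a + b) + b := by
        rw [← Nat.cast_add a b, Real.rpow_natCast, Nat.cast_add]
        field_simp

lemma mul_pow_card_union_le {z : ℝ} (hz : 0 ≤ z) {W : Finset V} (hQL : Q ⊆ L)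
    (hW : #(W \ Q) = e) :
    e * z ^ #(L ∪ W) ≤ z ^ #L * ((e - #(W ∩ (L \ Q))) * z ^ e + #(W ∩ (L \ Q))) := by
  have hsplit : #(W \ L) + #(W ∩ (L \ Q)) = e := by
    rw [← hW, ← card_sdiff_add_card_inter (W \ Q) L, sdiff_sdiff_left, sup_eq_right.mpr hQL,
      ← inter_sdiff_assoc, sdiff_inter_right_comm]
  rw [union_comm, ← card_sdiff_add_card W L, pow_add, ← mul_assoc, mul_comm]
  refine mul_le_mul_of_nonneg_left ?_ (pow_nonneg hz _)
  rw [← hsplit, Nat.cast_add, add_sub_cancel_right]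
  exact add_mul_pow_le hz _ _

variable [Fintype V]

lemma card_mul_sum_card_inter_sdiff_le {c : ℕ} (hQL : Q ⊆ L) (hN : ∀ y ∈ D, #(N y \ Q) = e)
    (hc : ∀ w ∉ Q, #{y ∈ D | w ∈ N y} = c) :
    Fintype.card V * ∑ y ∈ D, #(N y ∩ (L \ Q)) ≤ #L * (e * #D) := by
  have hsum : ∀ W, Disjoint W Q → ∑ y ∈ D, #(N y ∩ W) = #W * c := fun W hW => by
    rw [sum_card_inter_eq_sum_card_filter_mem, sum_const_nat fun w hw =>
      hc w (Finset.disjoint_left.mp hW hw)]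
  have htotal : e * #D = (Fintype.card V - #Q) * c := by
    rw [← card_compl, ← hsum _ disjoint_compl_left, mul_comm, ← smul_eq_mul, ← sum_const]
    exact sum_congr rfl fun y hy => by rw [← hN y hy, sdiff_eq]; rfl
  have hQ : #Q ≤ #L := card_le_card hQL
  have hL : #L ≤ Fintype.card V := card_le_univ L
  rw [hsum _ sdiff_disjoint, card_sdiff_of_subset hQL, htotal, ← mul_assoc, ← mul_assoc]
  refine Nat.mul_le_mul_right c ?_
  zify [hQ, hQ.trans hL]
  nlinarith

lemma sum_pow_card_union_le [Nonempty V] {c : ℕ} {z : ℝ} (hz₀ : 0 ≤ z) (hz₁ : z ≤ 1) (he : 0 < e)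
    (hQL : Q ⊆ L) (hN : ∀ y ∈ D, #(N y \ Q) = e) (hc : ∀ w ∉ Q, #{y ∈ D | w ∈ N y} = c) :
    ∑ y ∈ D, z ^ #(L ∪ N y) ≤
      z ^ #L * (#D * (z ^ e + #L / Fintype.card V * (1 - z ^ e))) := by
  have he' : (0 : ℝ) < e := Nat.cast_pos.mpr he
  have hV : (0 : ℝ) < Fintype.card V := Nat.cast_pos.mpr Fintype.card_pos
  have hJ : ∑ y ∈ D, (#(N y ∩ (L \ Q)) : ℝ) ≤ #L / Fintype.card V * (e * #D) := by
    rw [div_mul_eq_mul_div, le_div_iff₀' hV]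
    exact_mod_cast card_mul_sum_card_inter_sdiff_le hQL hN hc
  refine le_of_mul_le_mul_left ?_ he'
  calc e * ∑ y ∈ D, z ^ #(L ∪ N y)
      ≤ ∑ y ∈ D, z ^ #L * ((e - #(N y ∩ (L \ Q))) * z ^ e + #(N y ∩ (L \ Q))) := by
        rw [mul_sum]
        exact sum_le_sum fun y hy => mul_pow_card_union_le hz₀ hQL (hN y hy)
    _ = z ^ #L * (e * #D * z ^ e + (∑ y ∈ D, (#(N y ∩ (L \ Q)) : ℝ)) * (1 - z ^ e)) := by
        rw [← mul_sum, sum_add_distrib, ← sum_mul, sum_sub_distrib, sum_const, nsmul_eq_mul]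
        ring
    _ ≤ z ^ #L * (e * #D * z ^ e + #L / Fintype.card V * (e * #D) * (1 - z ^ e)) := by
        have := sub_nonneg.mpr (pow_le_one₀ hz₀ hz₁ : z ^ e ≤ 1)
        gcongr
    _ = e * (z ^ #L * (#D * (z ^ e + #L / Fintype.card V * (1 - z ^ e)))) := by ring

end Averaging

section Embeddings

variable {κ V : Type*} [Fintype κ]

/-- The set of entries of a tuple of distinct elements. -/
def entries (τ : κ ↪ V) : Finset V :=
  univ.map τ

lemma card_entries (τ : κ ↪ V) : #(entries τ) = Fintype.card κ :=
  card_map τ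

lemma entries_trans (τ : κ ↪ V) {V' : Type*} (σ : V ↪ V') :
    entries (τ.trans σ) = (entries τ).map σ :=
  (map_map τ σ univ).symm

variable [DecidableEq V] {p : ℕ}

lemma card_entries_inter (τ : κ ↪ V) (L : Finset V) : #(entries τ ∩ L) = #{i | τ i ∈ L} := by
  rw [← filter_mem_eq_inter, entries, filter_map, card_map]
  rfl

variable [Fintype V]

lemma map_mem_awakened_entries {P : Finset V} {v : V} {σ : V ↪ V} {τ : κ ↪ V}
    (hP : P.map σ = P) (hv : σ v = v) (hτ : τ ∈ awakened entries p P v) :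
    τ.trans σ ∈ awakened entries p P v := by
  have hcard : ∀ W : Finset V, W.map σ = W → #(entries (τ.trans σ) ∩ W) = #(entries τ ∩ W) :=
    fun W hW => by
      conv_lhs => rw [entries_trans, ← hW, ← map_inter, card_map]
  simpa only [awakened, Finset.mem_sdiff, mem_dormant, hcard P hP,
    hcard (insert v P) (by rw [map_insert, hP, hv])] using hτ

lemma card_awakened_entries_filter_mem_le {P : Finset V} {v w w' : V} (hw : w ∉ insert v P)
    (hw' : w' ∉ insert v P) :
    #{τ ∈ (awakened entries p P v : Finset (κ ↪ V)) | w ∈ entries τ} ≤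
      #{τ ∈ (awakened entries p P v : Finset (κ ↪ V)) | w' ∈ entries τ} := by
  have hfix : ∀ x ∈ insert v P, Equiv.swap w w' x = x := fun x hx =>
    Equiv.swap_apply_of_ne_of_ne (ne_of_mem_of_not_mem hx hw) (ne_of_mem_of_not_mem hx hw')
  have hP : P.map (Equiv.swap w w').toEmbedding = P := by
    refine eq_of_subset_of_card_le (fun x hx => ?_) (card_map _).ge
    obtain ⟨y, hy, rfl⟩ := mem_map.mp hx
    rwa [Equiv.coe_toEmbedding, hfix y (mem_insert_of_mem hy)]
  refine card_le_card_of_injOn (fun τ => τ.trans (Equiv.swap w w').toEmbedding) ?_ ?_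
  · simp only [coe_filter]
    rintro τ ⟨hτ, hwτ⟩
    refine ⟨map_mem_awakened_entries hP (hfix v (mem_insert_self v P)) hτ, ?_⟩
    rw [entries_trans]
    exact mem_map.mpr ⟨w, hwτ, Equiv.swap_apply_left w w'⟩
  · exact ((Equiv.embeddingCongr (Equiv.refl κ) (Equiv.swap w w')).injective).injOn

lemma exists_card_awakened_entries_filter_mem_eq (P : Finset V) (v : V) :
    ∃ c, ∀ w ∉ insert v P,
      #{τ ∈ (awakened entries p P v : Finset (κ ↪ V)) | w ∈ entries τ} = c := by
  by_cases h : ∃ w₀, w₀ ∉ insert v P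
  · obtain ⟨w₀, hw₀⟩ := h
    exact ⟨_, fun w hw => (card_awakened_entries_filter_mem_le hw hw₀).antisymm
      (card_awakened_entries_filter_mem_le hw₀ hw)⟩
  · exact ⟨0, fun w hw => absurd ⟨w, hw⟩ h⟩

lemma descFactorial_mul_descFactorial_le_card_embeddings [DecidableEq κ] (L : Finset V)
    (J : Finset κ) :
    (#L).descFactorial #J * (Fintype.card V - #L).descFactorial (Fintype.card κ - #J) ≤
      #{τ : κ ↪ V | univ.filter (τ · ∈ L) = J} := by
  have hcard : Fintype.card ((J ↪ L) × ({i // i ∉ J} ↪ {x // x ∉ L})) =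
      (#L).descFactorial #J * (Fintype.card V - #L).descFactorial (Fintype.card κ - #J) := by
    simp only [Fintype.card_prod, Fintype.card_embedding_eq, Fintype.card_subtype_compl,
      Fintype.card_coe]
  let glue : (J ↪ L) × ({i // i ∉ J} ↪ {x // x ∉ L}) → (κ ↪ V) := fun fg =>
    Equiv.embeddingCongr (Equiv.sumCompl (· ∈ J)) (Equiv.sumCompl (· ∈ L)) (fg.1.sumMap fg.2)
  have glue_mem (fg) (i : J) : glue fg i = fg.1 i := by
    change Equiv.sumCompl _ (Sum.map fg.1 fg.2 ((Equiv.sumCompl (· ∈ J)).symm i)) = _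
    rw [Equiv.sumCompl_symm_apply_of_pos i.2, Sum.map_inl, Equiv.sumCompl_apply_inl]
  have glue_notMem (fg) (i : {i // i ∉ J}) : glue fg i = fg.2 i := by
    change Equiv.sumCompl _ (Sum.map fg.1 fg.2 ((Equiv.sumCompl (· ∈ J)).symm i)) = _
    rw [Equiv.sumCompl_symm_apply_of_neg i.2, Sum.map_inr, Equiv.sumCompl_apply_inr]
  rw [← hcard, ← card_univ]
  refine card_le_card_of_injOn glue (fun fg _ => ?_) fun fg _ fg' _ h => ?_
  · rw [mem_coe, mem_filter_univ]
    ext i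
    rw [mem_filter_univ]
    by_cases hi : i ∈ J
    · simp only [hi, glue_mem fg ⟨i, hi⟩, coe_mem]
    · simp only [hi, glue_notMem fg ⟨i, hi⟩, (fg.2 ⟨i, hi⟩).2]
  · refine Prod.ext (DFunLike.ext _ _ fun i => ?_) (DFunLike.ext _ _ fun i => ?_)
    · exact Subtype.ext (by rw [← glue_mem, h, glue_mem])
    · exact Subtype.ext (by rw [← glue_notMem, h, glue_notMem])

lemma choose_mul_descFactorial_le_card_embeddings (p : ℕ) (L : Finset V) :
    (Fintype.card κ).choose p *
      ((#L).descFactorial p * (Fintype.card V - #L).descFactorial (Fintype.card κ - p)) ≤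
        #{τ : κ ↪ V | #(entries τ ∩ L) = p} := by
  classical
  have hmaps : ∀ τ ∈ ({τ | #(entries τ ∩ L) = p} : Finset (κ ↪ V)),
      univ.filter (τ · ∈ L) ∈ powersetCard p (univ : Finset κ) := fun τ hτ =>
    mem_powersetCard_univ.mpr <| (card_entries_inter τ L).symm.trans (mem_filter_univ τ |>.mp hτ)
  rw [card_eq_sum_card_fiberwise hmaps, ← card_univ (α := κ), ← card_powersetCard, ← smul_eq_mul]
  refine card_nsmul_le_sum _ _ _ fun J hJ => ?_
  obtain rfl := mem_powersetCard_univ.mp hJ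
  refine (descFactorial_mul_descFactorial_le_card_embeddings L J).trans (card_le_card ?_)
  intro τ hτ
  rw [mem_filter_univ] at hτ
  rw [mem_filter, mem_filter_univ, card_entries_inter]
  exact ⟨congrArg card hτ, hτ⟩

lemma card_dormant_entries_add_le (L : Finset V) :
    #(dormant entries p L : Finset (κ ↪ V)) + (Fintype.card κ).choose p *
      ((#L).descFactorial p * (Fintype.card V - #L).descFactorial (Fintype.card κ - p)) ≤
        (Fintype.card V).descFactorial (Fintype.card κ) := by
  have hdisj : Disjoint (dormant entries p L) ({τ | #(entries τ ∩ L) = p} : Finset (κ ↪ V)) :=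
    Finset.disjoint_left.mpr fun τ hτ hτ' =>
      (mem_dormant.mp hτ).ne ((mem_filter_univ τ).mp hτ')
  refine (Nat.add_le_add_left (choose_mul_descFactorial_le_card_embeddings p L) _).trans ?_
  rw [← card_union_of_disjoint hdisj, ← Fintype.card_embedding_eq]
  exact card_le_univ _

end Embeddings

section RandomTuples

/-- The hypergeometric probability that a uniformly random tuple of `p + e` distinct elements of
an `n`-set has exactly `p` entries in a given `t`-set. -/
def hitProb (n p e t : ℕ) : ℝ :=
  (p + e).choose p * (t.descFactorial p * (n - t).descFactorial e) / n.descFactorial (p + e)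

lemma hitProb_nonneg (n p e t : ℕ) : 0 ≤ hitProb n p e t := by
  unfold hitProb
  positivity

variable {κ V ι : Type*} [Fintype κ] [Fintype V] [DecidableEq V] {p e t : ℕ}

lemma card_dormant_entries_le (hκ : Fintype.card κ = p + e) (hV : p + e ≤ Fintype.card V)
    {L : Finset V} (hL : #L = t) :
    (#(dormant entries p L : Finset (κ ↪ V)) : ℝ) ≤
      Fintype.card (κ ↪ V) * (1 - hitProb (Fintype.card V) p e t) := by
  have hpos : ((Fintype.card V).descFactorial (p + e) : ℝ) ≠ 0 :=
    Nat.cast_ne_zero.mpr (Nat.descFactorial_pos.mpr hV).ne'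
  have hle : (#(dormant entries p L : Finset (κ ↪ V)) : ℝ) + (p + e).choose p *
      (t.descFactorial p * (Fintype.card V - t).descFactorial e) ≤
        (Fintype.card V).descFactorial (p + e) := by
    have := card_dormant_entries_add_le (κ := κ) (p := p) L
    rw [hκ, hL, Nat.add_sub_cancel_left] at this
    exact_mod_cast this
  rw [Fintype.card_embedding_eq, hκ, mul_one_sub, hitProb, mul_div_cancel₀ _ hpos]
  exact le_sub_iff_add_le.mpr hle

lemma hitProb_le_one {n : ℕ} (hn : p + e ≤ n) (ht : t ≤ n) : hitProb n p e t ≤ 1 := by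
  obtain ⟨L, -, hL⟩ := exists_subset_card_eq (ht.trans_eq (card_fin n).symm)
  have h := (Nat.cast_nonneg _).trans <| card_dormant_entries_le (κ := Fin (p + e))
    (Fintype.card_fin _) (hn.trans_eq (Fintype.card_fin n).symm) hL
  have hpos : (0 : ℝ) < Fintype.card (Fin (p + e) ↪ Fin n) := by
    rw [Fintype.card_embedding_eq, Fintype.card_fin, Fintype.card_fin]
    exact_mod_cast Nat.descFactorial_pos.mpr hn
  rw [Fintype.card_fin] at h
  exact sub_nonneg.mp (nonneg_of_mul_nonneg_right h hpos)

lemma sum_awakened_entries_pow_le (hκ : Fintype.card κ = p + e) (he : 0 < e) {z : ℝ}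
    (hz₀ : 0 ≤ z) (hz₁ : z ≤ 1) {P L : Finset V} {v : V} (hPL : P ⊆ L) (hv : v ∈ L)
    (hL : #L ≤ t) :
    ∑ τ ∈ (awakened entries p P v : Finset (κ ↪ V)), z ^ #(L ∪ entries τ) ≤
      z ^ #L * (#(awakened entries p P v : Finset (κ ↪ V)) *
        (z ^ e + t / Fintype.card V * (1 - z ^ e))) := by
  have : Nonempty V := ⟨v⟩
  obtain ⟨c, hc⟩ := exists_card_awakened_entries_filter_mem_eq (κ := κ) (p := p) P v
  refine (sum_pow_card_union_le hz₀ hz₁ he (insert_subset hv hPL) (fun τ hτ => ?_) hc).trans ?_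
  · rw [card_sdiff, inter_comm, card_inter_insert_of_mem_awakened hτ, card_entries, hκ,
      Nat.add_sub_cancel_left]
  · have := sub_nonneg.mpr (pow_le_one₀ hz₀ hz₁ : z ^ e ≤ 1)
    gcongr

variable [Fintype ι] [DecidableEq ι]

lemma card_filter_card_percolationClosure_mul_pow_le (hκ : Fintype.card κ = p + e)
    (hV : p + e ≤ Fintype.card V) (hp : 0 < p) (he : 0 < e) (ht : t ≤ Fintype.card V) {z : ℝ}
    (hz₀ : 0 ≤ z) (hz₁ : z ≤ 1) (U : Finset V) :
    #{ω : ι → κ ↪ V | #(percolationClosure p (fun a => entries (ω a)) U) = t} * z ^ t ≤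
      z ^ #U * (Fintype.card (κ ↪ V) * (1 - hitProb (Fintype.card V) p e t *
        ((1 - t / Fintype.card V) * (1 - z ^ e)))) ^ Fintype.card ι := by
  have ht₁ : (t / Fintype.card V : ℝ) ≤ 1 :=
    div_le_one_of_le₀ (Nat.cast_le.mpr ht) (Nat.cast_nonneg _)
  have hze := sub_nonneg.mpr (pow_le_one₀ hz₀ hz₁ : z ^ e ≤ 1)
  have hdormant : dormant entries p (∅ : Finset V) = (univ : Finset (κ ↪ V)) :=
    eq_univ_of_forall fun τ => mem_dormant.mpr <| by rwa [inter_empty, card_empty]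
  have hbound := card_outcomes_mul_pow_le (ι := ι) (N := entries (κ := κ) (V := V))
    (ρ := z ^ e + t / Fintype.card V * (1 - z ^ e)) hz₀
    (mul_nonneg (Nat.cast_nonneg _) (sub_nonneg.mpr (hitProb_le_one hV ht)))
    (by positivity) (by nlinarith) (fun L => card_dormant_entries_le hκ hV)
    (fun P L v hPL hv _ => sum_awakened_entries_pow_le hκ he hz₀ hz₁ hPL hv)
    (fun _ => .dormantOn ∅) U fun _ => empty_subset U
  simp only [outcomes, Knowledge.values, Knowledge.weight, hdormant, Fintype.piFinset_univ,
    prod_const, card_univ] at hbound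
  refine hbound.trans_eq ?_
  congr 2
  ring

end RandomTuples

section Ensemble

/-- The exponent in the Chernoff bound, with parameter `lam`, for the probability that percolation
from `u` of the `n` variables stops with exactly `t` variables. -/
def chernoffExponent (p e n m u t : ℕ) (lam : ℝ) : ℝ :=
  lam * (u - t) - m * hitProb n p e t * ((1 - t / n) * (1 - Real.exp (lam * e)))

/-- The probability that no `d`-stopping set with at least `α n` elements avoids the first `u`
variables. -/
def prNoStoppingSet (n m k d u : ℕ) (α : ℝ) : ℝ :=
  prG n m k fun ω => ¬∃ V : Finset (Fin n), (∀ i ∈ V, u ≤ (i : ℕ)) ∧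
    α * n ≤ (#V : ℝ) ∧ IsStoppingSet d ω V

variable {n m k p e : ℕ}

lemma nbhd_eq_entries (ω : Fin m → Fin k ↪ Fin n) : nbhd ω = fun a => entries (ω a) :=
  funext fun a => (map_eq_image (ω a) univ).symm

lemma card_outcome_pos (hkn : k ≤ n) : 0 < Fintype.card (Fin m → Fin k ↪ Fin n) := by
  rw [Fintype.card_pos_iff]
  exact ⟨fun _ => Fin.castLEEmb hkn⟩

lemma prG_eq (P : (Fin m → Fin k ↪ Fin n) → Prop) [DecidablePred P] :
    prG n m k P = #{ω | P ω} / Fintype.card (Fin m → Fin k ↪ Fin n) := by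
  unfold prG
  congr!

theorem prG_card_percolationClosure_eq_le (hn : p + e ≤ n) (hp : 0 < p) (he : 0 < e) {t : ℕ}
    (ht : t ≤ n) {lam : ℝ} (hlam : lam ≤ 0) (U : Finset (Fin n)) :
    prG n m (p + e) (fun ω => #(percolationClosure p (nbhd ω) U) = t) ≤
      Real.exp (chernoffExponent p e n m #U t lam) := by
  set x := hitProb n p e t * ((1 - t / n) * (1 - Real.exp (lam * e))) with hx
  have hx₁ : x ≤ 1 := by
    have hle : Real.exp (lam * e) ≤ 1 :=
      Real.exp_le_one_iff.mpr (mul_nonpos_of_nonpos_of_nonneg hlam (Nat.cast_nonneg e))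
    have htn : (t / n : ℝ) ≤ 1 := div_le_one_of_le₀ (Nat.cast_le.mpr ht) (Nat.cast_nonneg n)
    have htn₀ : (0 : ℝ) ≤ t / n := by positivity
    exact mul_le_one₀ (hitProb_le_one hn ht) (by nlinarith)
      (mul_le_one₀ (by linarith) (by linarith) (by linarith [Real.exp_nonneg (lam * e)]))
  have hcount := card_filter_card_percolationClosure_mul_pow_le (ι := Fin m)
    (κ := Fin (p + e)) (V := Fin n) (t := t) (Fintype.card_fin _)
    (hn.trans_eq (Fintype.card_fin n).symm) hp he (ht.trans_eq (Fintype.card_fin n).symm)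
    (Real.exp_nonneg lam) (Real.exp_le_one_iff.mpr hlam) U
  rw [Fintype.card_fin, Fintype.card_fin, ← Real.exp_nat_mul, ← Real.exp_nat_mul,
    ← Real.exp_nat_mul, mul_comm (e : ℝ), ← hx, mul_pow] at hcount
  have hpow : (1 - x) ^ m ≤ Real.exp (-(m * x)) := by
    rw [← mul_neg, Real.exp_nat_mul]
    exact pow_le_pow_left₀ (sub_nonneg.mpr hx₁) (Real.one_sub_le_exp_neg x) m
  have hpos : (0 : ℝ) < Fintype.card (Fin m → Fin (p + e) ↪ Fin n) :=
    Nat.cast_pos.mpr (card_outcome_pos hn)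
  rw [prG_eq, div_le_iff₀ hpos, ← mul_le_mul_iff_left₀ (Real.exp_pos (t * lam))]
  simp only [nbhd_eq_entries]
  refine hcount.trans ?_
  calc Real.exp (#U * lam) * (Fintype.card (Fin (p + e) ↪ Fin n) ^ m * (1 - x) ^ m)
      ≤ Real.exp (#U * lam) * (Fintype.card (Fin (p + e) ↪ Fin n) ^ m * Real.exp (-(m * x))) := by
        gcongr
    _ = Real.exp (#U * lam + -(m * x)) * Fintype.card (Fin m → Fin (p + e) ↪ Fin n) := by
        rw [Real.exp_add, Fintype.card_fun, Fintype.card_fin, Nat.cast_pow]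
        ring
    _ = _ := by
        rw [mul_right_comm, ← Real.exp_add, chernoffExponent, hx]
        congr 2
        ring

lemma prG_not (hkn : k ≤ n) (P : (Fin m → Fin k ↪ Fin n) → Prop) :
    prG n m k (fun ω => ¬P ω) = 1 - prG n m k P := by
  classical
  have hpos : (Fintype.card (Fin m → Fin k ↪ Fin n) : ℝ) ≠ 0 :=
    Nat.cast_ne_zero.mpr (card_outcome_pos hkn).ne'
  rw [prG_eq, prG_eq, eq_sub_iff_add_eq', ← add_div, div_eq_one_iff_eq hpos, ← card_univ]
  exact_mod_cast card_filter_add_card_filter_not (s := univ) P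

lemma prG_le_sum {I : Finset ℕ} {P : (Fin m → Fin k ↪ Fin n) → Prop}
    {Q : ℕ → (Fin m → Fin k ↪ Fin n) → Prop} (h : ∀ ω, P ω → ∃ t ∈ I, Q t ω) :
    prG n m k P ≤ ∑ t ∈ I, prG n m k (Q t) := by
  classical
  simp only [prG_eq, ← sum_div]
  refine div_le_div_of_nonneg_right ?_ (Nat.cast_nonneg _)
  have hsub : ({ω | P ω} : Finset (Fin m → Fin k ↪ Fin n)) ⊆ I.biUnion fun t => {ω | Q t ω} := by
    intro ω hω
    obtain ⟨t, ht, hQ⟩ := h ω ((mem_filter_univ ω).mp hω)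
    exact mem_biUnion.mpr ⟨t, ht, (mem_filter_univ ω).mpr hQ⟩
  exact_mod_cast (card_le_card hsub).trans card_biUnion_le

lemma IsStoppingSet.isPercolationClosed_compl {ω : Fin m → Fin (p + e) ↪ Fin n}
    {V : Finset (Fin n)} (hV : IsStoppingSet (e + 1) ω V) :
    IsPercolationClosed p (nbhd ω) Vᶜ := by
  intro a ha
  have hcard : #(nbhd ω a ∩ V) + #(nbhd ω a ∩ Vᶜ) = p + e := by
    rw [← Finset.sdiff_eq_inter_compl, add_comm, card_sdiff_add_card_inter, nbhd_eq_entries,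
      card_entries, Fintype.card_fin]
  obtain h | h := hV a
  · rw [subset_compl_iff_disjoint_right, disjoint_iff_inter_eq_empty, ← card_eq_zero, h]
  · omega

theorem one_sub_sum_exp_chernoffExponent_le_prNoStoppingSet (hn : p + e ≤ n) (hp : 0 < p)
    (he : 0 < e) {u : ℕ} (hu : u ≤ n) (α : ℝ) {lam : ℕ → ℝ} (hlam : ∀ t, lam t ≤ 0) :
    1 - ∑ t ∈ Icc u n with (Nat.cast t : ℝ) ≤ (1 - α) * n,
        Real.exp (chernoffExponent p e n m u t (lam t)) ≤
      prNoStoppingSet n m (p + e) (e + 1) u α := by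
  set U : Finset (Fin n) := {i | (i : ℕ) < u} with hU
  have hUcard : #U = u := by rw [hU, Fin.card_filter_val_lt, min_eq_right hu]
  rw [prNoStoppingSet, prG_not hn]
  refine sub_le_sub_left ((prG_le_sum (Q := fun t ω => #(percolationClosure p (nbhd ω) U) = t)
    (fun ω => ?_)).trans (sum_le_sum fun t ht => ?_)) 1
  · rintro ⟨V, hVu, hVcard, hV⟩
    have hle := card_le_card <| percolationClosure_subset (L := U) (fun i hi => mem_compl.mpr
      fun hiV => (hVu i hiV).not_gt ((mem_filter_univ i).mp hi)) hV.isPercolationClosed_compl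
    have hVn : #V ≤ n := card_finset_fin_le V
    rw [card_compl, Fintype.card_fin] at hle
    have hle' : (#(percolationClosure p (nbhd ω) U) : ℝ) ≤ n - #V := by
      rw [← Nat.cast_sub hVn]
      exact Nat.cast_le.mpr hle
    refine ⟨_, mem_filter.mpr ⟨mem_Icc.mpr ⟨?_, hle.trans (Nat.sub_le _ _)⟩, by linarith⟩, rfl⟩
    exact hUcard.ge.trans (card_le_card (subset_percolationClosure))
  · rw [mem_filter, mem_Icc] at ht
    exact hUcard ▸ prG_card_percolationClosure_eq_le hn hp he ht.1.2 (hlam t) U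

end Ensemble

section Variational

/-- The exponential rate `sup_{τ>0} inf_{λ<0} φ_{k,r}(μ,λ,τ)`. -/
def supInfPhi (k r : ℕ) (μ : ℝ) : ℝ :=
  sSup {v : ℝ | ∃ τ > (0 : ℝ), v = sInf {w : ℝ | ∃ lam < (0 : ℝ), w = phiE k r μ lam τ}}

lemma le_mul_one_add_pow {q : ℕ} (hq : 0 < q) {τ : ℝ} (hτ : 0 ≤ τ) :
    τ ≤ q ^ q / (q + 1 : ℝ) ^ (q + 1) * (1 + τ) ^ (q + 1) := by
  have hq₀ : (0 : ℝ) < q := Nat.cast_pos.mpr hq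
  have hy : 0 ≤ (1 + τ) * q / (q + 1) := by positivity
  have bernoulli := one_add_mul_le_pow (a := (1 + τ) * q / (q + 1) - 1) (by linarith) (q + 1)
  have hlhs : 1 + ((q + 1 : ℕ) : ℝ) * ((1 + τ) * q / (q + 1) - 1) = τ * q := by
    push_cast
    field_simp
    ring
  rw [hlhs, add_sub_cancel, div_pow, mul_pow, pow_succ (q : ℝ)] at bernoulli
  refine le_of_mul_le_mul_right (bernoulli.trans_eq ?_) hq₀
  ring

lemma exists_mul_lt_mul_one_sub_exp_neg {a b : ℝ} (hb : 0 < b) (hab : b < a) :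
    ∃ x > 0, x * b < a * (1 - Real.exp (-x)) := by
  have hx : 0 < (a - b) / (2 * b) := div_pos (sub_pos.mpr hab) (by positivity)
  refine ⟨(a - b) / (2 * b), hx, ?_⟩
  set x := (a - b) / (2 * b) with hx_def
  have hxb : x * b = (a - b) / 2 := by rw [hx_def]; field_simp
  have hexp : Real.exp (-x) ≤ (1 + x)⁻¹ := by
    rw [Real.exp_neg]
    exact inv_anti₀ (by linarith) (by linarith [Real.add_one_le_exp x])
  calc x * b < a * (x / (1 + x)) := by
        rw [mul_div_assoc', lt_div_iff₀ (by linarith)]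
        nlinarith
    _ = a * (1 - (1 + x)⁻¹) := by field_simp; ring
    _ ≤ a * (1 - Real.exp (-x)) := by
        have : 0 < a := hb.trans hab
        gcongr

variable {q e : ℕ} {μ τ : ℝ}

lemma muc_eq (q e : ℕ) :
    muc (q + 1 + e) (q + 2) =
      q ^ q / (q + 1 : ℝ) ^ (q + 1) / (e * (q + 1 + e).choose (q + 1)) := by
  have hchoose : ((q + 1 + e).choose (q + 2) : ℝ) * (q + 2) = e * (q + 1 + e).choose (q + 1) := by
    have := Nat.choose_succ_right_eq (q + 1 + e) (q + 1)
    rw [Nat.add_sub_cancel_left, mul_comm _ e] at this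
    exact_mod_cast this
  rw [muc, Nat.add_sub_cancel, show q + 2 - 1 = q + 1 from rfl, Nat.cast_add, Nat.cast_two,
    add_sub_cancel_right, show (q + 2 - 1 : ℝ) = q + 1 by ring, ← hchoose, ← div_div, ← div_div]
  ring

lemma muc_pos (q : ℕ) (he : 0 < e) : 0 < muc (q + 1 + e) (q + 2) := by
  have hchoose : 0 < (q + 1 + e).choose (q + 1) := Nat.choose_pos (Nat.le_add_right _ _)
  have hqq : (0 : ℝ) < q ^ q := by exact_mod_cast Nat.pow_self_pos
  rw [muc_eq]
  positivity

lemma phiE_eq (q e : ℕ) (μ lam τ : ℝ) :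
    phiE (q + 1 + e) (q + 2) μ lam τ =
      -(μ * (q + 1 + e).choose (q + 1) * (1 + τ) ^ (q + 1) * (1 - Real.exp (lam * e))) -
        lam * τ := by
  rw [phiE, show q + 2 - 1 = q + 1 from rfl,
    show (((q + 1 + e : ℕ) : ℝ) - (q + 2 : ℕ) + 1) * lam = lam * e by push_cast; ring]
  ring

lemma exists_phiE_le_neg (hq : 0 < q) (he : 0 < e) (hμ : muc (q + 1 + e) (q + 2) < μ) :
    ∃ c > 0, ∃ lam < 0, ∀ τ > 0, phiE (q + 1 + e) (q + 2) μ lam τ ≤ -c := by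
  have he₀ : (0 : ℝ) < e := Nat.cast_pos.mpr he
  have hchoose : (0 : ℝ) < (q + 1 + e).choose (q + 1) :=
    Nat.cast_pos.mpr (Nat.choose_pos (Nat.le_add_right _ _))
  set a := μ * (q + 1 + e).choose (q + 1) with ha
  set b : ℝ := q ^ q / (q + 1 : ℝ) ^ (q + 1) with hb
  have hba : b < e * a := by
    rw [muc_eq, div_lt_iff₀ (by positivity)] at hμ
    exact hμ.trans_eq (by ring)
  obtain ⟨x, hx, hlt⟩ := exists_mul_lt_mul_one_sub_exp_neg (by positivity) hba
  have hgap : 0 < a * (1 - Real.exp (-x)) - x / e * b := by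
    have hmul : e * (a * (1 - Real.exp (-x)) - x / e * b) =
        e * a * (1 - Real.exp (-x)) - x * b := by
      field_simp
    rw [← mul_pos_iff_of_pos_left he₀, hmul]
    exact sub_pos.mpr hlt
  refine ⟨_, hgap, -(x / e), neg_lt_zero.mpr (div_pos hx he₀), fun τ hτ => ?_⟩
  have hpow : 1 ≤ (1 + τ) ^ (q + 1) := one_le_pow₀ (by linarith)
  calc phiE (q + 1 + e) (q + 2) μ (-(x / e)) τ
      = x / e * τ - a * (1 - Real.exp (-x)) * (1 + τ) ^ (q + 1) := by
        rw [phiE_eq, neg_mul, div_mul_cancel₀ _ he₀.ne']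
        ring
    _ ≤ x / e * (b * (1 + τ) ^ (q + 1)) - a * (1 - Real.exp (-x)) * (1 + τ) ^ (q + 1) := by
        gcongr
        exact le_mul_one_add_pow hq hτ.le
    _ = -((a * (1 - Real.exp (-x)) - x / e * b) * (1 + τ) ^ (q + 1)) := by ring
    _ ≤ -(a * (1 - Real.exp (-x)) - x / e * b) :=
        neg_le_neg (le_mul_of_one_le_right hgap.le hpow)

lemma bddBelow_phiE (k r : ℕ) (hμ : 0 ≤ μ) (hτ : 0 ≤ τ) :
    BddBelow {w : ℝ | ∃ lam < (0 : ℝ), w = phiE k r μ lam τ} := by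
  refine ⟨-(μ * k.choose (r - 1) * (1 + τ) ^ (r - 1)), ?_⟩
  rintro _ ⟨lam, hlam, rfl⟩
  have hexp : 0 ≤ Real.exp ((k - r + 1) * lam) * (μ * k.choose (r - 1) * (1 + τ) ^ (r - 1)) := by
    positivity
  have hlin : lam * τ ≤ 0 := mul_nonpos_of_nonpos_of_nonneg hlam.le hτ
  unfold phiE
  linarith

lemma exists_sInf_phiE_le_neg (hq : 0 < q) (he : 0 < e) (hμ : muc (q + 1 + e) (q + 2) < μ) :
    ∃ c > 0, ∀ τ > 0,
      sInf {w : ℝ | ∃ lam < (0 : ℝ), w = phiE (q + 1 + e) (q + 2) μ lam τ} ≤ -c := by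
  obtain ⟨c, hc, lam, hlam, hle⟩ := exists_phiE_le_neg hq he hμ
  exact ⟨c, hc, fun τ hτ => (csInf_le (bddBelow_phiE _ _ ((muc_pos q he).trans hμ).le hτ.le)
    ⟨lam, hlam, rfl⟩).trans (hle τ hτ)⟩

theorem supInfPhi_neg (hq : 0 < q) (he : 0 < e) (hμ : muc (q + 1 + e) (q + 2) < μ) :
    supInfPhi (q + 1 + e) (q + 2) μ < 0 := by
  obtain ⟨c, hc, hle⟩ := exists_sInf_phiE_le_neg hq he hμ
  suffices supInfPhi (q + 1 + e) (q + 2) μ ≤ -c from this.trans_lt (neg_lt_zero.mpr hc)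
  refine csSup_le ⟨_, 1, one_pos, rfl⟩ ?_
  rintro _ ⟨τ, hτ, rfl⟩
  exact hle τ hτ

theorem exists_phiE_lt_supInfPhi_add (hq : 0 < q) (he : 0 < e)
    (hμ : muc (q + 1 + e) (q + 2) < μ) (hτ : 0 < τ) {δ : ℝ} (hδ : 0 < δ) :
    ∃ lam < 0, phiE (q + 1 + e) (q + 2) μ lam τ < supInfPhi (q + 1 + e) (q + 2) μ + δ := by
  obtain ⟨c, -, hle⟩ := exists_sInf_phiE_le_neg hq he hμ
  have hsup : sInf {w : ℝ | ∃ lam < (0 : ℝ), w = phiE (q + 1 + e) (q + 2) μ lam τ} ≤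
      supInfPhi (q + 1 + e) (q + 2) μ := by
    refine le_csSup ⟨-c, ?_⟩ ⟨τ, hτ, rfl⟩
    rintro _ ⟨τ', hτ', rfl⟩
    exact hle τ' hτ'
  obtain ⟨_, ⟨lam, hlam, rfl⟩, hlt⟩ := exists_lt_of_csInf_lt
    (by exact ⟨_, -1, neg_one_lt_zero, rfl⟩) (hsup.trans_lt (lt_add_of_pos_right _ hδ))
  exact ⟨lam, hlam, hlt⟩

end Variational

section Exponent

lemma pow_le_descFactorial {t a : ℕ} {s : ℝ} (hs : 0 ≤ s) (h : s + a ≤ t + 1) :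
    s ^ a ≤ t.descFactorial a := by
  have hat : a ≤ t + 1 := by
    have : (a : ℝ) ≤ (t + 1 : ℕ) := by
      push_cast
      linarith
    exact_mod_cast this
  calc s ^ a ≤ ((t + 1 - a : ℕ) : ℝ) ^ a := by
        refine pow_le_pow_left₀ hs ?_ a
        rw [Nat.cast_sub hat, Nat.cast_add_one]
        linarith
    _ ≤ t.descFactorial a := mod_cast Nat.pow_sub_le_descFactorial t a

lemma pow_mul_one_sub_le_descFactorial {t a : ℕ} {s c : ℝ} (hs : 0 < s)
    (h : s + a ≤ t + 1 + c) : s ^ a * (1 - a * c / s) ≤ t.descFactorial a := by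
  obtain hc | hc := le_total c s
  · have hcs : c / s ≤ 1 := (div_le_one hs).mpr hc
    have bernoulli := one_add_mul_le_pow (a := -(c / s)) (by linarith) a
    calc s ^ a * (1 - a * c / s) = s ^ a * (1 + a * -(c / s)) := by ring
      _ ≤ s ^ a * (1 + -(c / s)) ^ a := by gcongr
      _ = (s - c) ^ a := by rw [← mul_pow, mul_add, mul_neg, mul_div_cancel₀ c hs.ne']; ring
      _ ≤ t.descFactorial a := pow_le_descFactorial (sub_nonneg.mpr hc) (by linarith)
  · obtain rfl | ha := Nat.eq_zero_or_pos a
    · simp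
    · have hle : 1 ≤ a * c / s := by
        rw [one_le_div hs]
        exact hc.trans (le_mul_of_one_le_left (hs.le.trans hc) (Nat.one_le_cast.mpr ha))
      exact (mul_nonpos_of_nonneg_of_nonpos (by positivity) (sub_nonpos.mpr hle)).trans
        (Nat.cast_nonneg _)

lemma pow_mul_one_sub_le_descFactorial_mul_one_sub {n t : ℕ} (e : ℕ) (hn : 0 < n) (htn : t ≤ n) :
    (n : ℝ) ^ e * (1 - (e + 1) * (t + e) / n) ≤ (n - t).descFactorial e * (1 - t / n) := by
  have hn₀ : (0 : ℝ) < n := Nat.cast_pos.mpr hn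
  have h := pow_mul_one_sub_le_descFactorial (t := n - t) (a := e + 1) (c := t + e) hn₀
    (by rw [Nat.cast_sub htn]; push_cast; linarith)
  have hsucc : ((n - t).descFactorial (e + 1) : ℝ) ≤ (n - t) * (n - t).descFactorial e := by
    rw [← Nat.cast_sub htn, Nat.descFactorial_succ]
    exact_mod_cast Nat.mul_le_mul_right _ (Nat.sub_le _ _)
  refine le_of_mul_le_mul_left ?_ hn₀
  calc (n : ℝ) * (n ^ e * (1 - (e + 1) * (t + e) / n))
      = (n : ℝ) ^ (e + 1) * (1 - (e + 1 : ℕ) * (t + e) / n) := by push_cast; ring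
    _ ≤ ((n : ℝ) - t) * (n - t).descFactorial e := h.trans hsucc
    _ = n * ((n - t).descFactorial e * (1 - t / n)) := by
      rw [mul_left_comm, mul_one_sub, mul_div_cancel₀ _ hn₀.ne', mul_comm]

lemma mul_mul_one_sub_sub_le_mul {a b c d x y : ℝ} (ha : 0 ≤ a) (hb : 0 ≤ b) (hc : 0 ≤ c)
    (hd : 0 ≤ d) (hx : 0 ≤ x) (hy : 0 ≤ y) (hac : a * (1 - x) ≤ c) (hbd : b * (1 - y) ≤ d) :
    a * b * (1 - x - y) ≤ c * d := by
  obtain h | h := le_total (x + y) 1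
  · calc a * b * (1 - x - y) ≤ a * b * ((1 - x) * (1 - y)) := by
          have : 0 ≤ x * y := mul_nonneg hx hy
          gcongr
          linarith
      _ = a * (1 - x) * (b * (1 - y)) := by ring
      _ ≤ c * d := by
          have : 0 ≤ 1 - y := by linarith
          gcongr
  · exact (mul_nonpos_of_nonneg_of_nonpos (by positivity) (by linarith)).trans (by positivity)

variable {q e n m u t : ℕ} {μ : ℝ}

lemma le_mul_hitProb (hn : q + 1 + e ≤ n) (hm : μ * n ^ (q + 1) / u ^ q ≤ (m : ℝ)) :
    μ * (q + 1 + e).choose (q + 1) *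
        (t.descFactorial (q + 1) / u ^ q * ((n - t).descFactorial e / n ^ e)) ≤
      m * hitProb n (q + 1) e t := by
  have hn₀ : (0 : ℝ) < n := Nat.cast_pos.mpr (by omega)
  have hdesc : (0 : ℝ) < n.descFactorial (q + 1 + e) :=
    Nat.cast_pos.mpr (Nat.descFactorial_pos.mpr hn)
  have hle : (n.descFactorial (q + 1 + e) : ℝ) ≤ n ^ (q + 1 + e) :=
    mod_cast Nat.descFactorial_le_pow n (q + 1 + e)
  calc _ = μ * n ^ (q + 1) / u ^ q * ((q + 1 + e).choose (q + 1) *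
          (t.descFactorial (q + 1) * (n - t).descFactorial e) / n ^ (q + 1 + e)) := by
        rw [pow_add (n : ℝ) (q + 1) e]
        field_simp
    _ ≤ m * hitProb n (q + 1) e t := by
        unfold hitProb
        gcongr

lemma le_mul_hitProb_mul_one_sub (hn : q + 1 + e ≤ n) (hu : 0 < u) (htn : t ≤ n) (hμ : 0 ≤ μ)
    (hm : μ * n ^ (q + 1) / u ^ q ≤ (m : ℝ)) :
    μ * (q + 1 + e).choose (q + 1) * ((t + 1) / u) ^ (q + 1) * u *
        (1 - (q + 1) ^ 2 / (t + 1) - (e + 1) * (t + e) / n) ≤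
      m * hitProb n (q + 1) e t * (1 - t / n) := by
  have hn₀ : (0 : ℝ) < n := Nat.cast_pos.mpr (by omega)
  have htn' : 0 ≤ 1 - (t / n : ℝ) :=
    sub_nonneg.mpr (div_le_one_of_le₀ (Nat.cast_le.mpr htn) hn₀.le)
  have hin : ((t : ℝ) + 1) ^ (q + 1) * (1 - (q + 1) ^ 2 / (t + 1)) ≤
      t.descFactorial (q + 1) := by
    convert pow_mul_one_sub_le_descFactorial (t := t) (a := q + 1) (s := t + 1) (c := q + 1)
      (by positivity) (by push_cast; linarith) using 4
    push_cast
    ring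
  have hprod := mul_mul_one_sub_sub_le_mul (by positivity) (by positivity) (Nat.cast_nonneg _)
    (mul_nonneg (Nat.cast_nonneg _) htn') (by positivity) (by positivity) hin
    (pow_mul_one_sub_le_descFactorial_mul_one_sub e (by omega) htn)
  calc _ = μ * (q + 1 + e).choose (q + 1) / (u ^ q * n ^ e) * ((t + 1) ^ (q + 1) * n ^ e *
          (1 - (q + 1) ^ 2 / (t + 1) - (e + 1) * (t + e) / n)) := by
        rw [div_pow, pow_succ (u : ℝ)]
        field_simp
    _ ≤ μ * (q + 1 + e).choose (q + 1) / (u ^ q * n ^ e) *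
          (t.descFactorial (q + 1) * ((n - t).descFactorial e * (1 - t / n))) := by gcongr
    _ = μ * (q + 1 + e).choose (q + 1) *
          (t.descFactorial (q + 1) / u ^ q * ((n - t).descFactorial e / n ^ e)) * (1 - t / n) := by
        field_simp
    _ ≤ m * hitProb n (q + 1) e t * (1 - t / n) :=
        mul_le_mul_of_nonneg_right (le_mul_hitProb hn hm) htn'

lemma error_mul_le {K : ℝ} (q e : ℕ) (hu : 0 < u) (hut : u ≤ t) (htK : t ≤ K * u) :
    u * ((q + 1) ^ 2 / (t + 1) + (e + 1) * (t + e) / n) ≤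
      ((q + 1) ^ 2 + (e + 1) * (K + e)) * (1 + u ^ 2 / n : ℝ) := by
  have hu₁ : (1 : ℝ) ≤ u := Nat.one_le_cast.mpr hu
  have hut' : (u : ℝ) ≤ t := Nat.cast_le.mpr hut
  have hK : 0 ≤ K := nonneg_of_mul_nonneg_left ((Nat.cast_nonneg t).trans htK) (by linarith)
  have hin : u * ((q + 1) ^ 2 / (t + 1)) ≤ ((q : ℝ) + 1) ^ 2 := by
    rw [mul_div_assoc', div_le_iff₀ (by positivity), mul_comm]
    gcongr
    linarith
  have hout : u * ((e + 1) * (t + e) / n) ≤ (e + 1) * (K + e) * (u ^ 2 / n : ℝ) := by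
    calc u * ((e + 1) * (t + e) / n) ≤ u * ((e + 1) * (K * u + e * u) / n : ℝ) := by
          gcongr
          exact le_mul_of_one_le_right (Nat.cast_nonneg e) hu₁
      _ = (e + 1) * (K + e) * (u ^ 2 / n) := by ring
  have hcross₁ : 0 ≤ (q + 1) ^ 2 * (u ^ 2 / n : ℝ) := by positivity
  have hcross₂ : 0 ≤ (e + 1) * (K + e) := by positivity
  linarith

/-- The coefficient of the error `1 + u² / n` in the exponent for closures of size at most
`K u`. -/
def nearError (q e : ℕ) (K μ : ℝ) : ℝ :=
  μ * (q + 1 + e).choose (q + 1) * (K + 1) ^ (q + 1) * ((q + 1) ^ 2 + (e + 1) * (K + e))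

lemma nearError_nonneg (q e : ℕ) {K : ℝ} (hK : 0 ≤ K) (hμ : 0 ≤ μ) : 0 ≤ nearError q e K μ := by
  unfold nearError
  positivity

lemma sub_nearError_le_mul_hitProb (hn : q + 1 + e ≤ n) (hu : 0 < u) (hut : u ≤ t) (htn : t ≤ n)
    {K : ℝ} (htK : t ≤ K * u) (hμ : 0 ≤ μ) (hm : μ * n ^ (q + 1) / u ^ q ≤ (m : ℝ)) :
    μ * (q + 1 + e).choose (q + 1) * ((t + 1) / u) ^ (q + 1) * u -
        nearError q e K μ * (1 + u ^ 2 / n) ≤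
      m * hitProb n (q + 1) e t * (1 - t / n) := by
  refine le_trans ?_ (le_mul_hitProb_mul_one_sub hn hu htn hμ hm)
  have hu₀ : (0 : ℝ) < u := Nat.cast_pos.mpr hu
  have hu₁ : (1 : ℝ) ≤ u := Nat.one_le_cast.mpr hu
  have hK : 0 ≤ K := nonneg_of_mul_nonneg_left ((Nat.cast_nonneg t).trans htK) hu₀
  have hratio : ((t : ℝ) + 1) / u ≤ K + 1 := by
    rw [div_le_iff₀ hu₀]
    linarith
  have herror : μ * (q + 1 + e).choose (q + 1) * ((t + 1) / u) ^ (q + 1) *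
      (u * ((q + 1) ^ 2 / (t + 1) + (e + 1) * (t + e) / n)) ≤
        nearError q e K μ * (1 + u ^ 2 / n) := by
    have := error_mul_le (n := n) q e hu hut htK
    calc _ ≤ μ * (q + 1 + e).choose (q + 1) * (K + 1) ^ (q + 1) *
          (((q + 1) ^ 2 + (e + 1) * (K + e)) * (1 + u ^ 2 / n : ℝ)) := by gcongr
      _ = nearError q e K μ * (1 + u ^ 2 / n) := by rw [nearError, ← mul_assoc]
  linarith

lemma chernoffExponent_le_of_phiE_le {lam v E : ℝ} (hu : 0 < u) (hlam : lam ≤ 0) (hE : 0 ≤ E)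
    (hphi : phiE (q + 1 + e) (q + 2) μ lam ((t + 1 - u) / u) ≤ v)
    (hhit : μ * (q + 1 + e).choose (q + 1) * ((t + 1) / u) ^ (q + 1) * u - E ≤
      m * hitProb n (q + 1) e t * (1 - t / n)) :
    chernoffExponent (q + 1) e n m u t lam ≤ v * u + E := by
  have hu₀ : (0 : ℝ) < u := Nat.cast_pos.mpr hu
  have hexp : Real.exp (lam * e) ≤ 1 :=
    Real.exp_le_one_iff.mpr (mul_nonpos_of_nonpos_of_nonneg hlam (Nat.cast_nonneg e))
  rw [phiE_eq, show 1 + ((t : ℝ) + 1 - u) / u = (t + 1) / u by field_simp; ring] at hphi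
  calc chernoffExponent (q + 1) e n m u t lam
      = lam * (u - t) - m * hitProb n (q + 1) e t * (1 - t / n) * (1 - Real.exp (lam * e)) := by
        rw [chernoffExponent]
        ring
    _ ≤ lam * (u - t) - (μ * (q + 1 + e).choose (q + 1) * ((t + 1) / u) ^ (q + 1) * u - E) *
          (1 - Real.exp (lam * e)) := by gcongr
    _ = (-(μ * (q + 1 + e).choose (q + 1) * ((t + 1) / u) ^ (q + 1) * (1 - Real.exp (lam * e))) -
          lam * ((t + 1 - u) / u)) * u + lam + E * (1 - Real.exp (lam * e)) := by
        field_simp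
        ring
    _ ≤ v * u + 0 + E * 1 := by
        gcongr
        linarith [Real.exp_nonneg (lam * e)]
    _ = v * u + E := by ring

lemma exists_chernoffExponent_le_of_le_mul (hq : 0 < q) (he : 0 < e)
    (hμ : muc (q + 1 + e) (q + 2) < μ) (hn : q + 1 + e ≤ n) (hu : 0 < u) (hut : u ≤ t)
    (htn : t ≤ n) {K : ℝ} (htK : t ≤ K * u) (hm : μ * n ^ (q + 1) / u ^ q ≤ (m : ℝ)) :
    ∃ lam ≤ 0, chernoffExponent (q + 1) e n m u t lam ≤
      supInfPhi (q + 1 + e) (q + 2) μ * u + 1 + nearError q e K μ * (1 + u ^ 2 / n) := by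
  have hu₀ : (0 : ℝ) < u := Nat.cast_pos.mpr hu
  have hut' : (u : ℝ) ≤ t := Nat.cast_le.mpr hut
  have hμ₀ : 0 ≤ μ := ((muc_pos q he).trans hμ).le
  have hK : 0 ≤ K := nonneg_of_mul_nonneg_left ((Nat.cast_nonneg t).trans htK) hu₀
  obtain ⟨lam, hlam, hphi⟩ := exists_phiE_lt_supInfPhi_add hq he hμ
    (div_pos (by linarith) hu₀ : 0 < ((t : ℝ) + 1 - u) / u) (one_div_pos.mpr hu₀)
  refine ⟨lam, hlam.le, (chernoffExponent_le_of_phiE_le hu hlam.le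
    (mul_nonneg (nearError_nonneg q e hK hμ₀) (by positivity)) hphi.le
    (sub_nearError_le_mul_hitProb hn hu hut htn htK hμ₀ hm)).trans_eq ?_⟩
  rw [add_mul, one_div_mul_cancel hu₀.ne']

/-- A lower bound for `m * hitProb n (q + 1) e t / (K t)` over closures of size
`t ∈ [K u, (1 - α) n]`. -/
def farRate (q e : ℕ) (μ α : ℝ) : ℝ :=
  μ * (q + 1 + e).choose (q + 1) * (1 / 2) ^ (q + 1) * (α / 2) ^ e

lemma farRate_mul_le_mul_hitProb (hq : 0 < q) (hμ : 0 ≤ μ) {α K : ℝ} (hα : 0 ≤ α)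
    (hn : q + 1 + e ≤ n) (hu : 0 < u) (hut : u ≤ t) (htK : K * u ≤ t)
    (hqt : 2 * q ≤ t) (hen : 2 * e ≤ α * n) (htα : t ≤ (1 - α) * n)
    (hm : μ * n ^ (q + 1) / u ^ q ≤ (m : ℝ)) :
    farRate q e μ α * (K * t) ≤ m * hitProb n (q + 1) e t := by
  have hn₀ : (0 : ℝ) < n := Nat.cast_pos.mpr (by omega)
  have hu₀ : (0 : ℝ) < u := Nat.cast_pos.mpr hu
  have hqt' : 2 * (q : ℝ) ≤ t := mod_cast hqt
  have htn : t ≤ n := by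
    have : (t : ℝ) ≤ n := by nlinarith
    exact_mod_cast this
  have hin : (t / 2 : ℝ) ^ (q + 1) ≤ t.descFactorial (q + 1) :=
    pow_le_descFactorial (by positivity) (by push_cast; linarith)
  have hout : (α / 2 * n) ^ e ≤ (n - t).descFactorial e :=
    pow_le_descFactorial (by positivity) (by rw [Nat.cast_sub htn]; linarith)
  have hK : K ≤ (t / u : ℝ) ^ q :=
    ((le_div_iff₀ hu₀).mpr htK).trans
      (le_self_pow₀ ((one_le_div hu₀).mpr (Nat.cast_le.mpr hut)) hq.ne')
  refine le_trans ?_ (le_mul_hitProb hn hm)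
  calc farRate q e μ α * (K * t) ≤ farRate q e μ α * ((t / u) ^ q * t) := by
        unfold farRate
        gcongr
    _ = μ * (q + 1 + e).choose (q + 1) *
          ((t / 2) ^ (q + 1) / u ^ q * ((α / 2 * n) ^ e / n ^ e)) := by
        rw [farRate, div_pow (t : ℝ) u, mul_pow, div_pow (t : ℝ) 2, div_pow 1 (2 : ℝ), one_pow]
        field_simp
        ring
    _ ≤ _ := by gcongr

lemma chernoffExponent_neg_one_le (hq : 0 < q) (he : 0 < e) (hμ : 0 ≤ μ) {α K S : ℝ} (hα : 0 < α)
    (hS : S ≤ 0) (hK : 2 - S ≤ α / 2 * farRate q e μ α * K) (hn : q + 1 + e ≤ n) (hu : 0 < u)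
    (hut : u ≤ t) (htK : K * u ≤ t) (hqt : 2 * q ≤ t) (hen : 2 * e ≤ α * n)
    (htα : t ≤ (1 - α) * n) (hm : μ * n ^ (q + 1) / u ^ q ≤ (m : ℝ)) :
    chernoffExponent (q + 1) e n m u t (-1) ≤ S * u - t := by
  have hn₀ : (0 : ℝ) < n := Nat.cast_pos.mpr (by omega)
  have hut' : (u : ℝ) ≤ t := Nat.cast_le.mpr hut
  have htn : α ≤ 1 - (t : ℝ) / n := by
    rw [le_sub_comm, div_le_iff₀ hn₀]
    exact htα
  have hexp : Real.exp (-1 * e) ≤ 1 / 2 := by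
    refine (Real.exp_le_exp.mpr ?_).trans Real.exp_neg_one_lt_half.le
    linarith [(Nat.one_le_cast.mpr he : (1 : ℝ) ≤ e)]
  have hhit := farRate_mul_le_mul_hitProb hq hμ hα.le hn hu hut htK hqt hen htα hm
  have hdrift : (2 - S) * t ≤
      m * hitProb n (q + 1) e t * ((1 - t / n) * (1 - Real.exp (-1 * e))) := by
    calc (2 - S) * t ≤ α / 2 * farRate q e μ α * K * t := by gcongr
      _ = farRate q e μ α * (K * t) * (α * (1 / 2)) := by ring
      _ ≤ m * hitProb n (q + 1) e t * ((1 - t / n) * (1 - Real.exp (-1 * e))) := by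
          have := hitProb_nonneg n (q + 1) e t
          gcongr
          · linarith
          · linarith
  have hSt : S * t ≤ S * u := mul_le_mul_of_nonpos_left hut' hS
  rw [chernoffExponent]
  linarith

end Exponent

section UnionBound

lemma sum_exp_le {I : Finset ℕ} {f : ℕ → ℝ} {N : ℕ} {A : ℝ}
    (hnear : ∀ t ∈ I, t ≤ N → f t ≤ A) (hfar : ∀ t ∈ I, N < t → f t ≤ A - t) :
    ∑ t ∈ I, Real.exp (f t) ≤ (N + 3) * Real.exp A := by
  have hterm : ∀ t ∈ I,
      Real.exp (f t) ≤ Real.exp A * ((if t ∈ range (N + 1) then 1 else 0) + (1 / 2) ^ t) := by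
    intro t ht
    rw [mul_add]
    split_ifs with htN
    · rw [mul_one]
      exact (Real.exp_le_exp.mpr (hnear t ht (mem_range_succ_iff.mp htN))).trans
        (le_add_of_nonneg_right (by positivity))
    · rw [mem_range_succ_iff, not_le] at htN
      have hgeom : Real.exp (-t) ≤ (1 / 2) ^ t := by
        rw [← mul_neg_one, Real.exp_nat_mul]
        exact pow_le_pow_left₀ (Real.exp_nonneg _) Real.exp_neg_one_lt_half.le t
      rw [mul_zero, zero_add]
      calc Real.exp (f t) ≤ Real.exp (A - t) := Real.exp_le_exp.mpr (hfar t ht htN)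
        _ = Real.exp A * Real.exp (-t) := by rw [← Real.exp_add, sub_eq_add_neg]
        _ ≤ Real.exp A * (1 / 2) ^ t := by gcongr
  have hcount : ∑ t ∈ I, (if t ∈ range (N + 1) then 1 else 0 : ℝ) ≤ N + 1 := by
    rw [sum_boole, filter_mem_eq_inter]
    exact_mod_cast (card_le_card inter_subset_right).trans_eq (card_range (N + 1))
  have hgeom : ∑ t ∈ I, (1 / 2 : ℝ) ^ t ≤ 2 :=
    (summable_geometric_two.sum_le_tsum I fun _ _ => by positivity).trans_eq tsum_geometric_two
  calc ∑ t ∈ I, Real.exp (f t)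
      ≤ Real.exp A * (∑ t ∈ I, (if t ∈ range (N + 1) then 1 else 0) + ∑ t ∈ I, (1 / 2) ^ t) := by
        rw [← sum_add_distrib, mul_sum]
        exact sum_le_sum hterm
    _ ≤ Real.exp A * (N + 1 + 2) := by gcongr
    _ = (N + 3) * Real.exp A := by ring

lemma mul_exp_le_exp_add_mul_max {u K a D w : ℝ} (hK : 0 ≤ K) (hD : 0 ≤ D) (hu : 0 < u)
    (hlog : 1 ≤ Real.log u) :
    (K * u + 3) * Real.exp (a + 1 + D * (1 + w)) ≤
      Real.exp (a + (Real.log (K + 3) + 2 + 2 * D) * max w (Real.log u)) := by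
  have hu₁ : 1 ≤ u := (Real.one_le_exp zero_le_one).trans ((Real.le_log_iff_exp_le hu).mp hlog)
  set M := max w (Real.log u)
  have hw : w ≤ M := le_max_left _ _
  have hlogM : Real.log u ≤ M := le_max_right _ _
  have hM : 1 ≤ M := hlog.trans hlogM
  calc (K * u + 3) * Real.exp (a + 1 + D * (1 + w))
      ≤ (K + 3) * u * Real.exp (a + 1 + D * (1 + w)) := by
        gcongr
        linarith
    _ = Real.exp (a + (Real.log (K + 3) + Real.log u + 1 + D * (1 + w))) := by
        rw [← Real.exp_log (by positivity : 0 < (K + 3) * u), Real.log_mul (by positivity) hu.ne',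
          ← Real.exp_add]
        congr 1
        ring
    _ ≤ Real.exp (a + (Real.log (K + 3) * M + M + M + D * (M + M))) := by
        have : 0 ≤ Real.log (K + 3) := Real.log_nonneg (by linarith)
        gcongr
        exact le_mul_of_one_le_right this hM
    _ = Real.exp (a + (Real.log (K + 3) + 2 + 2 * D) * M) := by
        congr 1
        ring

variable {q e n m u K : ℕ} {α μ : ℝ}

lemma exists_chernoffExponent_le (hq : 0 < q) (he : 0 < e) (hα : 0 < α)
    (hμ : muc (q + 1 + e) (q + 2) < μ)
    (hK : 2 - supInfPhi (q + 1 + e) (q + 2) μ ≤ α / 2 * farRate q e μ α * K)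
    (hn : q + 1 + e ≤ n) (hqu : 2 * q ≤ u) (hen : 2 * e ≤ α * n)
    (hm : μ * n ^ (q + 1) / u ^ q ≤ (m : ℝ)) (t : ℕ) :
    ∃ lam ≤ 0, t ∈ (Icc u n).filter (fun t : ℕ => (t : ℝ) ≤ (1 - α) * n) →
      (t ≤ K * u → chernoffExponent (q + 1) e n m u t lam ≤
        supInfPhi (q + 1 + e) (q + 2) μ * u + 1 + nearError q e K μ * (1 + u ^ 2 / n)) ∧
      (K * u < t → chernoffExponent (q + 1) e n m u t lam ≤
        supInfPhi (q + 1 + e) (q + 2) μ * u - t) := by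
  by_cases htI : t ∈ (Icc u n).filter fun t : ℕ => (t : ℝ) ≤ (1 - α) * n
  swap
  · exact ⟨0, le_rfl, fun h => absurd h htI⟩
  obtain ⟨ht, htα⟩ := mem_filter.mp htI
  obtain ⟨hut, htn⟩ := mem_Icc.mp ht
  have hu : 0 < u := by omega
  obtain htK | htK := le_or_gt t (K * u)
  · obtain ⟨lam, hlam, hle⟩ := exists_chernoffExponent_le_of_le_mul (K := K) hq he hμ hn hu hut htn
      (mod_cast htK) hm
    exact ⟨lam, hlam, fun _ => ⟨fun _ => hle, fun h => absurd htK h.not_ge⟩⟩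
  · refine ⟨-1, neg_one_lt_zero.le, fun _ => ⟨fun h => absurd htK h.not_gt, fun _ => ?_⟩⟩
    exact chernoffExponent_neg_one_le hq he ((muc_pos q he).trans hμ).le hα
      (supInfPhi_neg hq he hμ).le hK hn hu hut (mod_cast htK.le) (hqu.trans hut) hen htα hm

theorem one_sub_exp_le_prNoStoppingSet (hq : 0 < q) (he : 0 < e) (hα : 0 < α)
    (hμ : muc (q + 1 + e) (q + 2) < μ)
    (hK : 2 - supInfPhi (q + 1 + e) (q + 2) μ ≤ α / 2 * farRate q e μ α * K)
    (hn : q + 1 + e ≤ n) (hun : u ≤ n) (hqu : 2 * q ≤ u) (hen : 2 * e ≤ α * n)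
    (hlog : 1 ≤ Real.log u) (hm : μ * n ^ (q + 1) / u ^ q ≤ (m : ℝ)) :
    1 - Real.exp (supInfPhi (q + 1 + e) (q + 2) μ * u +
        (Real.log (K + 3) + 2 + 2 * nearError q e K μ) * max (u ^ 2 / n : ℝ) (Real.log u)) ≤
      prNoStoppingSet n m (q + 1 + e) (e + 1) u α := by
  have hu : (0 : ℝ) < u := Nat.cast_pos.mpr (by omega)
  have hD : 0 ≤ nearError q e K μ :=
    nearError_nonneg q e (Nat.cast_nonneg K) ((muc_pos q he).trans hμ).le
  choose lam hlam hexp using exists_chernoffExponent_le hq he hα hμ hK hn hqu hen hm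
  refine le_trans (sub_le_sub_left ?_ 1) <|
    one_sub_sum_exp_chernoffExponent_le_prNoStoppingSet hn q.succ_pos he hun α hlam
  refine le_trans ?_ (mul_exp_le_exp_add_mul_max (Nat.cast_nonneg K) hD hu hlog)
  rw [← Nat.cast_mul]
  refine sum_exp_le (fun t ht => (hexp t ht).1) fun t ht htK => ((hexp t ht).2 htK).trans ?_
  have : 0 ≤ nearError q e K μ * (1 + u ^ 2 / n) := by positivity
  linarith

end UnionBound

section Asymptotics

lemma UGood.eventually_mul_max_le {u : ℕ → ℕ} (hu : UGood u) (C : ℝ) {c : ℝ} (hc : 0 < c) :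
    ∀ᶠ n in atTop, C * max ((u n : ℝ) ^ 2 / n) (Real.log (u n)) ≤ c * u n := by
  have hε : 0 < c / (|C| + 1) := by positivity
  filter_upwards [hu.2.eventually_lt_const hε,
    hu.1.eventually (Real.isLittleO_log_id_atTop.def hε)] with n hratio hlog
  have hmax : max ((u n : ℝ) ^ 2 / n) (Real.log (u n)) ≤ c / (|C| + 1) * u n := by
    refine max_le ?_ ?_
    · rw [sq, mul_div_right_comm]
      gcongr
    · rw [id_eq, Real.norm_of_nonneg (Nat.cast_nonneg _)] at hlog
      exact (le_abs_self _).trans hlog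
  calc C * max ((u n : ℝ) ^ 2 / n) (Real.log (u n))
      ≤ (|C| + 1) * max ((u n : ℝ) ^ 2 / n) (Real.log (u n)) := by
        refine mul_le_mul_of_nonneg_right ?_ (le_max_of_le_left (by positivity))
        linarith [le_abs_self C]
    _ ≤ (|C| + 1) * (c / (|C| + 1) * u n) := by gcongr
    _ = c * u n := by field_simp

lemma UGood.eventually_le {u : ℕ → ℕ} (hu : UGood u) : ∀ᶠ n in atTop, u n ≤ n := by
  filter_upwards [hu.2.eventually_lt_const one_pos, eventually_gt_atTop 0] with n hratio hn
  rw [div_lt_one (Nat.cast_pos.mpr hn)] at hratio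
  exact_mod_cast hratio.le

lemma farRate_pos {q e : ℕ} {α μ : ℝ} (hα : 0 < α) (hμ : 0 < μ) : 0 < farRate q e μ α := by
  have hchoose : 0 < (q + 1 + e).choose (q + 1) := Nat.choose_pos (Nat.le_add_right _ _)
  unfold farRate
  positivity

theorem exists_eventually_one_sub_exp_le_prNoStoppingSet {q e : ℕ} {α μ : ℝ} {u m : ℕ → ℕ}
    (hq : 0 < q) (he : 0 < e) (hα : 0 < α) (hu : UGood u) (hμ : muc (q + 1 + e) (q + 2) < μ)
    (hm : ∀ᶠ n : ℕ in atTop, μ * n ^ (q + 1) / u n ^ q ≤ (m n : ℝ)) :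
    ∃ C : ℝ, ∀ᶠ n in atTop,
      1 - Real.exp (supInfPhi (q + 1 + e) (q + 2) μ * u n +
          C * max ((u n : ℝ) ^ 2 / n) (Real.log (u n))) ≤
        prNoStoppingSet n (m n) (q + 1 + e) (e + 1) (u n) α := by
  have hrate : 0 < α / 2 * farRate q e μ α :=
    mul_pos (half_pos hα) (farRate_pos hα ((muc_pos q he).trans hμ))
  obtain ⟨K, hK⟩ := exists_nat_ge
    ((2 - supInfPhi (q + 1 + e) (q + 2) μ) / (α / 2 * farRate q e μ α))
  rw [div_le_iff₀' hrate] at hK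
  refine ⟨Real.log (K + 3) + 2 + 2 * nearError q e K μ, ?_⟩
  filter_upwards [hm, hu.eventually_le, eventually_ge_atTop (q + 1 + e),
    (tendsto_natCast_atTop_iff.mp hu.1).eventually_ge_atTop (2 * q),
    (tendsto_natCast_atTop_atTop.const_mul_atTop hα).eventually_ge_atTop (2 * (e : ℝ)),
    (Real.tendsto_log_atTop.comp hu.1).eventually_ge_atTop 1] with n hm hun hn hqu hen hlog
  exact one_sub_exp_le_prNoStoppingSet hq he hα hμ hK hn hun hqu hen hlog hm

end Asymptotics

theorem stmt12_general (k r : ℕ) (hr : 3 ≤ r) (hrk : r ≤ k) (α : ℝ) (hα : 0 < α)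
    (u : ℕ → ℕ) (hu : UGood u) (μ : ℝ) (hμ : muc k r < μ) (m : ℕ → ℕ)
    (hm : ∀ᶠ n : ℕ in atTop, μ * (n : ℝ) ^ (r - 1) / (u n : ℝ) ^ (r - 2) ≤ m n) :
    (∃ C : ℝ, ∀ᶠ n in atTop,
      1 - Real.exp (supInfPhi k r μ * u n +
          C * max ((u n : ℝ) ^ 2 / n) (Real.log (u n))) ≤
        prNoStoppingSet n (m n) k (k - r + 2) (u n) α) ∧
    (∃ c > (0 : ℝ), ∀ᶠ n in atTop,
      1 - Real.exp (-c * u n) ≤ prNoStoppingSet n (m n) k (k - r + 2) (u n) α) := by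
  obtain ⟨q, rfl⟩ := Nat.exists_eq_add_of_le' (le_of_add_le_left (b := 1) hr)
  obtain ⟨e, rfl⟩ := Nat.exists_eq_add_of_le (le_of_add_le_left (b := 1) hrk)
  have hq : 0 < q := by omega
  have he : 0 < e := by omega
  rw [show q + 1 + e - (q + 2) + 2 = e + 1 by omega]
  obtain ⟨C, hC⟩ := exists_eventually_one_sub_exp_le_prNoStoppingSet hq he hα hu hμ hm
  have hc : 0 < -supInfPhi (q + 1 + e) (q + 2) μ / 2 :=
    half_pos (neg_pos.mpr (supInfPhi_neg hq he hμ))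
  refine ⟨⟨C, hC⟩, _, hc, ?_⟩
  filter_upwards [hC, hu.eventually_mul_max_le C hc] with n hle hmax
  refine le_trans (sub_le_sub_left (Real.exp_le_exp.mpr ?_) 1) hle
  linarith

/-- Theorem `thm:MU`: for `m = ⌈μ n^{r-1}/u(n)^{r-2}⌉` with
`μ > μ_c(k,r)` and any `α ∈ (0,1)`, the probability that there is NO `(k-r+2)`-stopping
set of size at least `αn` inside `{u(n)+1,…,n}` is at least
`1 - exp((sup_{τ>0} inf_{λ<0} φ_{k,r}(μ,λ,τ)) u(n) + C max{u(n)²/n, log u(n)})`; in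
particular it tends to `1` exponentially fast in `u(n)`. -/
theorem stmt12 (k r : ℕ) (hr : 3 ≤ r) (hrk : r ≤ k)
    (α : ℝ) (hα : α ∈ Set.Ioo (0 : ℝ) 1)
    (u : ℕ → ℕ) (hu : UGood u)
    (μ : ℝ) (hμ : muc k r < μ)
    (m : ℕ → ℕ) (hm : ∀ n, m n = ⌈μ * (n : ℝ) ^ (r - 1) / (u n : ℝ) ^ (r - 2)⌉₊) :
    (∃ C : ℝ, ∀ᶠ n in atTop,
      1 - Real.exp
            ((sSup {v : ℝ | ∃ τ > (0 : ℝ),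
                v = sInf {w : ℝ | ∃ lam < (0 : ℝ), w = phiE k r μ lam τ}}) * u n
              + C * max ((u n : ℝ) ^ 2 / n) (Real.log (u n))) ≤
        prG n (m n) k (fun ω : Fin (m n) → (Fin k ↪ Fin n) =>
          ¬ ∃ V : Finset (Fin n), (∀ i ∈ V, u n ≤ (i : ℕ)) ∧
              α * n ≤ (V.card : ℝ) ∧ IsStoppingSet (k - r + 2) ω V)) ∧
    (∃ c > (0 : ℝ), ∀ᶠ n in atTop,
      1 - Real.exp (-c * u n) ≤
        prG n (m n) k (fun ω : Fin (m n) → (Fin k ↪ Fin n) =>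
          ¬ ∃ V : Finset (Fin n), (∀ i ∈ V, u n ≤ (i : ℕ)) ∧
              α * n ≤ (V.card : ℝ) ∧ IsStoppingSet (k - r + 2) ω V)) :=
  stmt12_general k r hr hrk α hα.1 u hu μ hμ m (.of_forall fun n => (hm n).symm ▸ Nat.le_ceil _)
end
end
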